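/- arXiv:1107.3882 — 4 statements merged into one kernel-verified Lean document; each statement's English description precedes it below -/
import Mathlib

section
/- For all real numbers x₁, x₂, x₃ with |x₁| + |x₂| + |x₃| < 1, one has Σ_{i₁,i₂,i₃ ≥ 0} Ω(i₁,i₂,i₃)·x₁^{i₁} x₂^{i₂} x₃^{i₃} = (1 − x₁ − x₃) / ((1 − x₁)(1 − x₃)(1 − x₁ − x₂ − x₃)). -/
/-- The monotonicity condition: for the list of block lengths `a`, a permutation `τ` of
`{0, …, a.sum}` must increase on the `k`-th block for even `k` (0-indexed, i.e. odd blocks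
in 1-indexed counting) and decrease on the `k`-th block for odd `k`. -/
def MonotCond (a : List ℕ) (τ : Equiv.Perm (Fin (a.sum + 1))) : Prop :=
  ∀ k, k < a.length →
    ∀ j, (a.take k).sum ≤ j → j < (a.take (k + 1)).sum →
      ∀ h : j + 1 < a.sum + 1,
        if k % 2 = 0
        then τ ⟨j, Nat.lt_of_succ_lt h⟩ < τ ⟨j + 1, h⟩
        else τ ⟨j + 1, h⟩ < τ ⟨j, Nat.lt_of_succ_lt h⟩

/-- `Omega a` is the number of permutations of `{0, …, a.sum}` with the prescribed
alternating monotonicity pattern given by the block lengths in `a`. -/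
noncomputable def Omega (a : List ℕ) : ℕ :=
  Nat.card {τ : Equiv.Perm (Fin (a.sum + 1)) // MonotCond a τ}

/-!
Among the words that rise `a` times, fall `b + 1` times and then rise `c` times, the largest letter
stands either at the end of the first rise or at the very end. Deleting it leaves a word of type
`(a, b, c)` or `(a - 1, b + 1, c)` in the first case and of type `(a, b + 1, c - 1)` in the second,
and each such word arises exactly once. So the coefficients obey the recurrence of
`1 / (1 - x₁ - x₂ - x₃)` away from the boundary `b = 0`, where they are all `1`.

Absolute convergence comes from the same recurrence: a partial sum `S` of the absolute values over
a box satisfies `S ≤ (‖x₁‖ + ‖x₂‖ + ‖x₃‖) * S + C`, which bounds `S` when the factor is less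
than `1`.
-/

/-- The positions at which the word `f 0, …, f (n - 1)` ascends. They are recorded as natural
numbers, so that words of different lengths can be compared. -/
def ascents {α : Type*} [LT α] {n : ℕ} (f : Fin n → α) : Set ℕ :=
  {j | ∃ h : j + 1 < n, f ⟨j, Nat.lt_of_succ_lt h⟩ < f ⟨j + 1, h⟩}

lemma ascents_eq_Iio_iff {α : Type*} [Preorder α] {n : ℕ} {f : Fin (n + 1) → α} :
    ascents f = Set.Iio n ↔ StrictMono f := by
  rw [Fin.strictMono_iff_lt_succ]
  constructor
  · intro h i
    have hi : (i : ℕ) ∈ ascents f := h ▸ i.isLt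
    exact hi.2
  · intro h
    ext j
    exact ⟨fun ⟨hj, _⟩ => Nat.lt_of_succ_lt_succ hj, fun hj => ⟨Nat.succ_lt_succ hj, h ⟨j, hj⟩⟩⟩

lemma notMem_ascents_iff {α : Type*} [LinearOrder α] {n j : ℕ} {f : Fin n → α}
    (hf : Function.Injective f) (h : j + 1 < n) :
    j ∉ ascents f ↔ f ⟨j + 1, h⟩ < f ⟨j, Nat.lt_of_succ_lt h⟩ := by
  simp only [ascents, Set.mem_ofPred_eq, h, exists_true_left, not_lt]
  exact (hf.ne (by simp)).le_iff_lt

lemma perm_strictMono_iff_eq_one {n : ℕ} {σ : Equiv.Perm (Fin n)} : StrictMono σ ↔ σ = 1 := by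
  refine ⟨fun hσ => DFunLike.coe_injective ?_, fun hσ => hσ ▸ strictMono_id⟩
  exact (hσ.range_inj strictMono_id).1 (by rw [σ.surjective.range_eq, Set.range_id])

/-- The permutation whose word arises from that of `σ` by inserting a new largest letter at
position `p`. -/
def insertMax {n : ℕ} (p : Fin (n + 1)) (σ : Equiv.Perm (Fin n)) : Equiv.Perm (Fin (n + 1)) :=
  (finSuccEquiv' p).trans (σ.optionCongr.trans finSuccEquivLast.symm)

section insertMax

variable {n : ℕ} (p : Fin (n + 1)) (σ : Equiv.Perm (Fin n))

lemma insertMax_apply_self : insertMax p σ p = Fin.last n := by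
  simp [insertMax]

lemma insertMax_apply_succAbove (i : Fin n) :
    insertMax p σ (p.succAbove i) = (σ i).castSucc := by
  simp [insertMax]

lemma insertMax_apply_of_lt {j : ℕ} (h : j < n) (hp : j < p) :
    insertMax p σ ⟨j, h.trans n.lt_succ_self⟩ = (σ ⟨j, h⟩).castSucc := by
  rw [← insertMax_apply_succAbove p, Fin.succAbove_of_castSucc_lt _ _ hp]
  rfl

lemma insertMax_apply_of_ge {j : ℕ} (h : j < n) (hp : p ≤ j) :
    insertMax p σ ⟨j + 1, Nat.succ_lt_succ h⟩ = (σ ⟨j, h⟩).castSucc := by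
  rw [← insertMax_apply_succAbove p, Fin.succAbove_of_le_castSucc _ _ hp]
  rfl

variable {p σ} {j : ℕ}

lemma mem_ascents_insertMax_of_lt (h : j + 1 < p) :
    j ∈ ascents (insertMax p σ) ↔ j ∈ ascents σ := by
  have hj : j + 1 < n := by omega
  simp only [ascents, Set.mem_ofPred_eq, insertMax_apply_of_lt p σ hj h,
    insertMax_apply_of_lt p σ (Nat.lt_of_succ_lt hj) (Nat.lt_of_succ_lt h),
    Fin.castSucc_lt_castSucc_iff, hj, hj.trans n.lt_succ_self, exists_true_left]

lemma mem_ascents_insertMax_of_eq (h : j + 1 = p) : j ∈ ascents (insertMax p σ) := by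
  have hj : j < n := by omega
  obtain rfl : p = ⟨j + 1, Nat.succ_lt_succ hj⟩ := Fin.ext h.symm
  refine ⟨Nat.succ_lt_succ hj, ?_⟩
  rw [insertMax_apply_self, insertMax_apply_of_lt _ σ hj j.lt_succ_self]
  exact Fin.castSucc_lt_last _

variable (p σ) in
lemma notMem_ascents_insertMax : (p : ℕ) ∉ ascents (insertMax p σ) := by
  rintro ⟨_, h⟩
  rw [Fin.eta, insertMax_apply_self] at h
  exact h.not_ge (Fin.le_last _)

lemma succ_mem_ascents_insertMax (h : p ≤ j) :
    j + 1 ∈ ascents (insertMax p σ) ↔ j ∈ ascents σ := by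
  constructor
  · rintro ⟨hj, hlt⟩
    have hj : j + 1 < n := Nat.lt_of_succ_lt_succ hj
    rw [insertMax_apply_of_ge p σ hj (h.trans j.le_succ),
      insertMax_apply_of_ge p σ (Nat.lt_of_succ_lt hj) h] at hlt
    exact ⟨hj, hlt⟩
  · rintro ⟨hj, hlt⟩
    refine ⟨Nat.succ_lt_succ hj, ?_⟩
    rwa [insertMax_apply_of_ge p σ hj (h.trans j.le_succ),
      insertMax_apply_of_ge p σ (Nat.lt_of_succ_lt hj) h]

lemma insertMax_bijective :
    Function.Bijective fun q : Fin (n + 1) × Equiv.Perm (Fin n) => insertMax q.1 q.2 := by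
  rw [Fintype.bijective_iff_injective_and_card]
  refine ⟨?_, by simp [Fintype.card_perm, Nat.factorial_succ]⟩
  rintro ⟨p, σ⟩ ⟨q, τ⟩ h
  dsimp only at h
  obtain rfl : p = q := (insertMax q τ).injective <| by
    rw [insertMax_apply_self, ← h, insertMax_apply_self]
  have hστ : σ = τ := Equiv.ext fun i => Fin.castSucc_injective n <| by
    rw [← insertMax_apply_succAbove p, h, insertMax_apply_succAbove]
  rw [hστ]

end insertMax

/-- The ascents of a word that rises `a` times, then falls `b` times, then rises `c` times. -/
def zigzag (a b c : ℕ) : Set ℕ :=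
  {j | j < a ∨ a + b ≤ j ∧ j < a + b + c}

lemma mem_zigzag {a b c j : ℕ} : j ∈ zigzag a b c ↔ j < a ∨ a + b ≤ j ∧ j < a + b + c :=
  Iff.rfl

lemma monotCond_iff {a b c : ℕ} {τ : Equiv.Perm (Fin ([a, b, c].sum + 1))} :
    MonotCond [a, b, c] τ ↔ (∀ j < a, j ∈ ascents τ) ∧ (∀ j, a ≤ j → j < a + b → j ∉ ascents τ) ∧
      ∀ j, a + b ≤ j → j < a + b + c → j ∈ ascents τ := by
  have hsum : [a, b, c].sum = a + b + c := by simp [add_assoc]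
  have hlt (j : ℕ) (h : j < a + b + c) : j + 1 < [a, b, c].sum + 1 := by omega
  simp only [MonotCond]
  constructor
  · intro H
    refine ⟨fun j hj => ⟨hlt j (by omega), ?_⟩, fun j h₁ h₂ => ?_, fun j h₁ h₂ => ⟨hlt j h₂, ?_⟩⟩
    · simpa using H 0 (by simp) j (by simp) (by simpa) (hlt j (by omega))
    · rw [notMem_ascents_iff τ.injective (hlt j (by omega))]
      simpa using H 1 (by simp) j (by simpa) (by simpa) (hlt j (by omega))
    · simpa using H 2 (by simp) j (by simpa) (by simpa [add_assoc] using h₂) (hlt j h₂)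
  · rintro ⟨h₁, h₂, h₃⟩ k hk j hj hj' h
    have hk : k < 3 := hk
    interval_cases k
    · exact (h₁ j (by simpa using hj')).2
    · exact (notMem_ascents_iff τ.injective h).1 (h₂ j (by simpa using hj) (by simpa using hj'))
    · exact (h₃ j (by simpa using hj) (by simpa [add_assoc] using hj')).2

lemma monotCond_iff_ascents_eq_zigzag {a b c : ℕ} {τ : Equiv.Perm (Fin ([a, b, c].sum + 1))} :
    MonotCond [a, b, c] τ ↔ ascents τ = zigzag a b c := by
  have hlt {j : ℕ} (hj : j ∈ ascents τ) : j < a + b + c := by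
    have := hj.1
    simp only [List.sum_cons, List.sum_nil] at this
    omega
  rw [monotCond_iff]
  constructor
  · rintro ⟨h₁, h₂, h₃⟩
    ext j
    grind [mem_zigzag]
  · intro h
    rw [h]
    grind [mem_zigzag]

/-- The permutations of `n` letters whose word has the ascents `zigzag a b c`; the intended case is
`n = a + b + c + 1`. -/
def zigzagPerms (n a b c : ℕ) : Set (Equiv.Perm (Fin n)) :=
  {τ | ascents τ = zigzag a b c}

lemma Omega_eq_ncard {a b c n : ℕ} (hn : n = a + b + c + 1) :
    Omega [a, b, c] = (zigzagPerms n a b c).ncard := by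
  obtain rfl : n = [a, b, c].sum + 1 := by simp [hn, add_assoc]
  simp only [Omega, monotCond_iff_ascents_eq_zigzag]
  rfl

lemma Omega_zero_middle (a c : ℕ) : Omega [a, 0, c] = 1 := by
  have hzigzag : zigzag a 0 c = Set.Iio (a + c) := by
    ext j
    simp only [zigzag, Set.mem_ofPred_eq, Set.mem_Iio]
    omega
  rw [Omega_eq_ncard (n := a + c + 1) (by simp), zigzagPerms, hzigzag]
  simp only [ascents_eq_Iio_iff, perm_strictMono_iff_eq_one, Set.ofPred_eq_eq_singleton,
    Set.ncard_singleton]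

section Recurrence

variable {a b c n : ℕ} {p : Fin (n + 1)} {σ : Equiv.Perm (Fin n)}

lemma eq_or_eq_of_ascents_insertMax_eq_zigzag (hn : n = a + b + c + 1)
    (h : ascents (insertMax p σ) = zigzag a (b + 1) c) : (p : ℕ) = a ∨ (p : ℕ) = n ∧ 0 < c := by
  have hp := notMem_ascents_insertMax p σ
  rw [h, mem_zigzag] at hp
  have hp_pred (j : ℕ) (hj : j + 1 = p) : j ∈ zigzag a (b + 1) c :=
    h ▸ mem_ascents_insertMax_of_eq hj
  simp only [mem_zigzag] at hp_pred
  have := p.isLt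
  rcases Nat.eq_zero_or_eq_succ_pred (p : ℕ) with h0 | hsucc
  · omega
  · have := hp_pred _ hsucc.symm
    omega

lemma ascents_insertMax_eq_zigzag_iff_forall (hp : (p : ℕ) = a) :
    ascents (insertMax p σ) = zigzag a (b + 1) c ↔
      ∀ j, j + 1 ≠ a → (j ∈ ascents σ ↔ j ∈ zigzag a b c) := by
  subst hp
  rw [Set.ext_iff]
  constructor
  · intro h j hj
    rcases lt_or_ge (j + 1) p with hlt | hge
    · rw [← mem_ascents_insertMax_of_lt hlt, h, mem_zigzag, mem_zigzag]
      omega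
    · rw [← succ_mem_ascents_insertMax (p := p) (by omega), h, mem_zigzag, mem_zigzag]
      omega
  · intro h j
    rcases lt_trichotomy j p with hlt | rfl | hgt
    · refine iff_of_true ?_ (Or.inl hlt)
      rcases Nat.lt_or_eq_of_le (Nat.succ_le_of_lt hlt) with hlt' | heq
      · exact (mem_ascents_insertMax_of_lt hlt').2 ((h j hlt'.ne).2 (Or.inl hlt))
      · exact mem_ascents_insertMax_of_eq heq
    · refine iff_of_false (notMem_ascents_insertMax p σ) ?_
      rw [mem_zigzag]
      omega
    · obtain ⟨i, rfl⟩ := Nat.exists_eq_succ_of_ne_zero hgt.ne_bot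
      rw [Nat.succ_eq_add_one, succ_mem_ascents_insertMax (by omega), h i (by omega), mem_zigzag,
        mem_zigzag]
      omega

lemma ascents_insertMax_eq_zigzag_iff_of_eq_left (hp : (p : ℕ) = a) :
    ascents (insertMax p σ) = zigzag a (b + 1) c ↔
      ascents σ = zigzag a b c ∨ 0 < a ∧ ascents σ = zigzag (a - 1) (b + 1) c := by
  rw [ascents_insertMax_eq_zigzag_iff_forall hp]
  generalize ascents σ = s
  constructor
  · intro h
    by_cases hmem : 0 < a ∧ a - 1 ∉ s
    · refine Or.inr ⟨hmem.1, Set.ext fun j => ?_⟩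
      rcases eq_or_ne (j + 1) a with rfl | hj
      · refine iff_of_false hmem.2 ?_
        rw [mem_zigzag]
        omega
      · rw [h j hj, mem_zigzag, mem_zigzag]
        omega
    · refine Or.inl (Set.ext fun j => ?_)
      rcases eq_or_ne (j + 1) a with rfl | hj
      · exact iff_of_true (by simpa using hmem) (Or.inl j.lt_succ_self)
      · exact h j hj
  · rintro (rfl | ⟨ha, rfl⟩) j hj
    · rfl
    · simp only [mem_zigzag]
      omega

lemma ascents_insertMax_eq_zigzag_iff_of_eq_last (hc : 0 < c) (hn : n = a + b + c + 1)
    (hp : (p : ℕ) = n) :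
    ascents (insertMax p σ) = zigzag a (b + 1) c ↔ ascents σ = zigzag a (b + 1) (c - 1) := by
  rw [Set.ext_iff, Set.ext_iff]
  refine forall_congr' fun j => ?_
  rcases lt_trichotomy (j + 1) p with hlt | heq | hgt
  · refine iff_congr (mem_ascents_insertMax_of_lt hlt) ?_
    rw [mem_zigzag, mem_zigzag]
    omega
  · have hσ : j ∉ ascents σ := fun h => by have := h.1; omega
    simp only [mem_ascents_insertMax_of_eq heq, hσ, true_iff, false_iff, mem_zigzag]
    omega
  · have hσ : j ∉ ascents σ := fun h => by have := h.1; omega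
    have hins : j ∉ ascents (insertMax p σ) := fun h => by have := h.1; omega
    simp only [hins, hσ, false_iff, mem_zigzag]
    omega

lemma ascents_insertMax_eq_zigzag_iff (hn : n = a + b + c + 1) :
    ascents (insertMax p σ) = zigzag a (b + 1) c ↔
      (p : ℕ) = a ∧ (ascents σ = zigzag a b c ∨ 0 < a ∧ ascents σ = zigzag (a - 1) (b + 1) c) ∨
        (p : ℕ) = n ∧ 0 < c ∧ ascents σ = zigzag a (b + 1) (c - 1) := by
  constructor
  · intro h
    rcases eq_or_eq_of_ascents_insertMax_eq_zigzag hn h with hp | ⟨hp, hc⟩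
    · exact Or.inl ⟨hp, (ascents_insertMax_eq_zigzag_iff_of_eq_left hp).1 h⟩
    · exact Or.inr ⟨hp, hc, (ascents_insertMax_eq_zigzag_iff_of_eq_last hc hn hp).1 h⟩
  · rintro (⟨hp, h⟩ | ⟨hp, hc, h⟩)
    · exact (ascents_insertMax_eq_zigzag_iff_of_eq_left hp).2 h
    · exact (ascents_insertMax_eq_zigzag_iff_of_eq_last hc hn hp).2 h

lemma preimage_insertMax_zigzagPerms (hn : n = a + b + c + 1) :
    (fun q : Fin (n + 1) × Equiv.Perm (Fin n) => insertMax q.1 q.2) ⁻¹'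
        zigzagPerms (n + 1) a (b + 1) c =
      {Fin.ofNat (n + 1) a} ×ˢ
          (zigzagPerms n a b c ∪ {σ | 0 < a ∧ σ ∈ zigzagPerms n (a - 1) (b + 1) c}) ∪
        {Fin.last n} ×ˢ {σ | 0 < c ∧ σ ∈ zigzagPerms n a (b + 1) (c - 1)} := by
  ext ⟨p, σ⟩
  have ha : p = Fin.ofNat (n + 1) a ↔ (p : ℕ) = a := by
    rw [Fin.ext_iff, Fin.val_ofNat, Nat.mod_eq_of_lt (by omega)]
  have hlast : p = Fin.last n ↔ (p : ℕ) = n := Fin.ext_iff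
  simp only [Set.mem_preimage, Set.mem_ofPred_eq, Set.mem_union, Set.mem_prod,
    Set.mem_singleton_iff, ha, hlast]
  exact ascents_insertMax_eq_zigzag_iff hn

end Recurrence

lemma ite_Omega_eq_ncard {a b c n : ℕ} {P : Prop} [Decidable P] (hn : P → n = a + b + c + 1) :
    (if P then Omega [a, b, c] else 0) = {σ | P ∧ σ ∈ zigzagPerms n a b c}.ncard := by
  split_ifs with h
  · simp [h, Omega_eq_ncard (hn h)]
  · simp [h]

lemma disjoint_zigzagPerms {a b c n : ℕ} :
    Disjoint (zigzagPerms n a b c) {σ | 0 < a ∧ σ ∈ zigzagPerms n (a - 1) (b + 1) c} := by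
  rw [Set.disjoint_left]
  rintro σ hσ ⟨ha, hσ'⟩
  have h : a - 1 ∈ zigzag a b c ↔ a - 1 ∈ zigzag (a - 1) (b + 1) c := by
    rw [← show ascents σ = _ from hσ, ← show ascents σ = _ from hσ']
  simp only [mem_zigzag] at h
  omega

lemma Omega_succ_middle (a b c : ℕ) :
    Omega [a, b + 1, c] =
      Omega [a, b, c] + (if 0 < a then Omega [a - 1, b + 1, c] else 0) +
        if 0 < c then Omega [a, b + 1, c - 1] else 0 := by
  let n := a + b + c + 1
  have hne : Fin.ofNat (n + 1) a ≠ Fin.last n := by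
    rw [Ne, Fin.ext_iff, Fin.val_ofNat, Nat.mod_eq_of_lt (by omega), Fin.val_last]
    omega
  rw [Omega_eq_ncard (show n + 1 = a + (b + 1) + c + 1 by omega),
    ← Set.ncard_preimage_of_injective_subset_range insertMax_bijective.injective
      (insertMax_bijective.surjective.range_eq ▸ Set.subset_univ _),
    preimage_insertMax_zigzagPerms rfl,
    Set.ncard_union_eq (Set.disjoint_left.2 fun q hq hq' => hne (hq.1.symm.trans hq'.1)),
    Set.ncard_prod, Set.ncard_prod, Set.ncard_union_eq disjoint_zigzagPerms, Set.ncard_singleton,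
    Set.ncard_singleton, one_mul, one_mul, Omega_eq_ncard (show n = a + b + c + 1 from rfl),
    ite_Omega_eq_ncard (n := n) (by omega), ite_Omega_eq_ncard (n := n) (by omega)]

/-- The translate of `f` by `e`, extended by `0`: multiplying the power series with coefficients
`f` by the monomial of exponent `e` gives the power series with coefficients `shift e f`. -/
def shift {ι M : Type*} [LE ι] [DecidableLE ι] [Sub ι] [Zero M] (e : ι) (f : ι → M) (i : ι) : M :=
  if e ≤ i then f (i - e) else 0

lemma norm_shift {ι E : Type*} [LE ι] [DecidableLE ι] [Sub ι] [SeminormedAddGroup E]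
    (e : ι) (f : ι → E) (i : ι) : ‖shift e f i‖ = shift e (fun j => ‖f j‖) i := by
  simp only [shift, apply_ite norm, norm_zero]

section Shift

variable {ι κ : Type*} [AddCommMonoid ι] [PartialOrder ι] [IsOrderedCancelAddMonoid ι]
  [CanonicallyOrderedAdd ι] [Sub ι] [OrderedSub ι] [DecidableLE ι]

lemma shift_eq_extend {M : Type*} [Zero M] (e : ι) (f : ι → M) :
    shift e f = Function.extend (· + e) f 0 := by
  funext i
  by_cases h : e ≤ i
  · obtain ⟨j, rfl⟩ := exists_add_of_le h
    rw [add_comm, (add_left_injective e).extend_apply, shift, if_pos le_add_self,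
      add_tsub_cancel_right]
  · rw [shift, if_neg h, Function.extend_apply', Pi.zero_apply]
    rintro ⟨j, rfl⟩
    exact h le_add_self

lemma hasSum_shift_iff {M : Type*} [AddCommMonoid M] [TopologicalSpace M] {e : ι} {f : ι → M}
    {a : M} : HasSum (shift e f) a ↔ HasSum f a := by
  rw [shift_eq_extend, hasSum_extend_zero (add_left_injective e)]

variable [LocallyFiniteOrderBot ι]

lemma sum_Iic_shift_le {M : Type*} [AddCommMonoid M] [PartialOrder M] [IsOrderedAddMonoid M]
    {f : ι → M} (hf : ∀ i, 0 ≤ f i) (e n : ι) :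
    ∑ i ∈ Finset.Iic n, shift e f i ≤ ∑ i ∈ Finset.Iic n, f i := by
  rw [shift_eq_extend, ← Finset.sum_preimage (· + e) _ (add_left_injective e).injOn]
  · simp only [(add_left_injective e).extend_apply]
    refine Finset.sum_le_sum_of_subset_of_nonneg (fun i hi => ?_) fun i _ _ => hf i
    simp only [Finset.mem_preimage, Finset.mem_Iic] at hi ⊢
    exact le_self_add.trans hi
  · exact fun i _ hi => Function.extend_apply' _ _ _ hi

variable [IsDirectedOrder ι] [Fintype κ]

lemma summable_of_le_sum_shift {e : κ → ι} {c : κ → ℝ} (hc : ∀ k, 0 ≤ c k)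
    (hc_sum : ∑ k, c k < 1) {f g : ι → ℝ} (hf : ∀ i, 0 ≤ f i) (hg : ∀ i, 0 ≤ g i)
    (hg_summable : Summable g) (h : ∀ i, f i ≤ ∑ k, c k * shift (e k) f i + g i) :
    Summable f := by
  refine summable_of_sum_le (c := (∑' i, g i) / (1 - ∑ k, c k)) hf fun u => ?_
  obtain ⟨n, hn⟩ := u.exists_le
  refine (Finset.sum_le_sum_of_subset_of_nonneg (fun i hi => Finset.mem_Iic.2 (hn i hi))
    fun i _ _ => hf i).trans ?_
  have : ∑ i ∈ Finset.Iic n, f i ≤ (∑ k, c k) * ∑ i ∈ Finset.Iic n, f i + ∑' i, g i := calc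
    ∑ i ∈ Finset.Iic n, f i ≤ ∑ i ∈ Finset.Iic n, (∑ k, c k * shift (e k) f i + g i) :=
      Finset.sum_le_sum fun i _ => h i
    _ = ∑ k, c k * ∑ i ∈ Finset.Iic n, shift (e k) f i + ∑ i ∈ Finset.Iic n, g i := by
      rw [Finset.sum_add_distrib, Finset.sum_comm]
      simp only [Finset.mul_sum]
    _ ≤ ∑ k, c k * ∑ i ∈ Finset.Iic n, f i + ∑' i, g i :=
      add_le_add
        (Finset.sum_le_sum fun k _ => mul_le_mul_of_nonneg_left (sum_Iic_shift_le hf _ _) (hc k))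
        (hg_summable.sum_le_tsum _ fun i _ => hg i)
    _ = (∑ k, c k) * ∑ i ∈ Finset.Iic n, f i + ∑' i, g i := by rw [Finset.sum_mul]
  rw [le_div_iff₀ (by linarith)]
  linarith

theorem hasSum_of_eq_sum_shift {𝕜 : Type*} [NormedField 𝕜] [CompleteSpace 𝕜] {e : κ → ι}
    {x : κ → 𝕜} (hx : ∑ k, ‖x k‖ < 1) {f g : ι → 𝕜} {b : 𝕜} (hg_norm : Summable fun i => ‖g i‖)
    (hg : HasSum g b) (h : ∀ i, f i = ∑ k, x k * shift (e k) f i + g i) :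
    HasSum f (b / (1 - ∑ k, x k)) := by
  have hf : Summable f := by
    refine .of_norm (summable_of_le_sum_shift (e := e) (fun k => norm_nonneg (x k)) hx
      (fun i => norm_nonneg (f i)) (fun i => norm_nonneg (g i)) hg_norm fun i => ?_)
    calc ‖f i‖ = ‖∑ k, x k * shift (e k) f i + g i‖ := by rw [← h]
      _ ≤ ‖∑ k, x k * shift (e k) f i‖ + ‖g i‖ := norm_add_le _ _
      _ ≤ ∑ k, ‖x k‖ * shift (e k) (fun j => ‖f j‖) i + ‖g i‖ := by
        gcongr
        simpa only [norm_mul, norm_shift] using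
          norm_sum_le Finset.univ fun k => x k * shift (e k) f i
  obtain ⟨s, hs⟩ := hf
  have hs_eq : s = (∑ k, x k) * s + b := by
    rw [Finset.sum_mul]
    refine hs.unique ?_
    rw [funext h]
    exact (hasSum_sum fun k _ => (hasSum_shift_iff.2 hs).mul_left (x k)).add hg
  have hne : 1 - ∑ k, x k ≠ 0 := by
    rw [sub_ne_zero]
    intro hsum
    exact ((norm_sum_le _ _).trans_lt hx).ne (by rw [← hsum, norm_one])
  convert hs using 1
  rw [div_eq_iff hne]
  linear_combination -hs_eq

end Shift

section GeneratingFunction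

variable {R : Type*} [CommSemiring R]

/-- The term of index `i` of the generating function of `Omega` in three variables. -/
noncomputable def omegaTerm (x₁ x₂ x₃ : R) (i : ℕ × ℕ × ℕ) : R :=
  (Omega [i.1, i.2.1, i.2.2] : R) * x₁ ^ i.1 * x₂ ^ i.2.1 * x₃ ^ i.2.2

/-- The terms of the generating function that do not involve the second variable: their
coefficients are all `1`. -/
def boundaryTerm (x₁ x₃ : R) (i : ℕ × ℕ × ℕ) : R :=
  if i.2.1 = 0 then x₁ ^ i.1 * x₃ ^ i.2.2 else 0

/-- The terms of the generating function that involve the second variable, with the index of that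
variable lowered by one. -/
noncomputable def interiorTerm (x₁ x₂ x₃ : R) (i : ℕ × ℕ × ℕ) : R :=
  omegaTerm x₁ x₂ x₃ (i + (0, 1, 0))

variable (x₁ x₂ x₃ : R)

lemma omegaTerm_eq_boundaryTerm_add (i : ℕ × ℕ × ℕ) :
    omegaTerm x₁ x₂ x₃ i =
      boundaryTerm x₁ x₃ i + shift (0, 1, 0) (interiorTerm x₁ x₂ x₃) i := by
  obtain ⟨a, _ | b, c⟩ := i
  · simp [omegaTerm, boundaryTerm, shift, Omega_zero_middle]
  · simp [omegaTerm, boundaryTerm, interiorTerm, shift]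

lemma mul_shift_left_interiorTerm (a b c : ℕ) :
    x₁ * shift (1, 0, 0) (interiorTerm x₁ x₂ x₃) (a, b, c) =
      (if 0 < a then Omega [a - 1, b + 1, c] else 0 : ℕ) * (x₁ ^ a * x₂ ^ (b + 1) * x₃ ^ c) := by
  cases a
  · simp [shift]
  · simp only [shift, Prod.mk_le_mk, zero_le, le_add_iff_nonneg_left, and_self, ↓reduceIte,
      interiorTerm, omegaTerm, Prod.mk_sub_mk, tsub_zero, add_tsub_cancel_right, Prod.mk_add_mk,
      add_zero, lt_add_iff_pos_left, Order.lt_add_one_iff]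
    ring

lemma mul_shift_right_interiorTerm (a b c : ℕ) :
    x₃ * shift (0, 0, 1) (interiorTerm x₁ x₂ x₃) (a, b, c) =
      (if 0 < c then Omega [a, b + 1, c - 1] else 0 : ℕ) * (x₁ ^ a * x₂ ^ (b + 1) * x₃ ^ c) := by
  cases c
  · simp [shift]
  · simp only [shift, Prod.mk_le_mk, zero_le, le_add_iff_nonneg_left, and_self, ↓reduceIte,
      interiorTerm, omegaTerm, Prod.mk_sub_mk, tsub_zero, add_tsub_cancel_right, Prod.mk_add_mk,
      add_zero, lt_add_iff_pos_left, Order.lt_add_one_iff]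
    ring

lemma interiorTerm_eq_add_shift (i : ℕ × ℕ × ℕ) :
    interiorTerm x₁ x₂ x₃ i =
      x₁ * shift (1, 0, 0) (interiorTerm x₁ x₂ x₃) i +
        x₂ * shift (0, 1, 0) (interiorTerm x₁ x₂ x₃) i +
        x₃ * shift (0, 0, 1) (interiorTerm x₁ x₂ x₃) i + x₂ * boundaryTerm x₁ x₃ i := by
  obtain ⟨a, b, c⟩ := i
  have hterm : interiorTerm x₁ x₂ x₃ (a, b, c) =
      Omega [a, b + 1, c] * (x₁ ^ a * x₂ ^ (b + 1) * x₃ ^ c) := by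
    simp [interiorTerm, omegaTerm, mul_assoc]
  have hmiddle : Omega [a, b, c] * (x₁ ^ a * x₂ ^ (b + 1) * x₃ ^ c) =
      x₂ * (boundaryTerm x₁ x₃ (a, b, c) +
        shift (0, 1, 0) (interiorTerm x₁ x₂ x₃) (a, b, c)) := by
    rw [← omegaTerm_eq_boundaryTerm_add, omegaTerm]
    ring
  rw [mul_shift_left_interiorTerm, mul_shift_right_interiorTerm, hterm, Omega_succ_middle,
    Nat.cast_add, Nat.cast_add, add_mul, add_mul, hmiddle]
  ring

end GeneratingFunction

section Summation

variable {𝕜 : Type*} [NormedField 𝕜]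

lemma norm_boundaryTerm (x₁ x₃ : 𝕜) (i : ℕ × ℕ × ℕ) :
    ‖boundaryTerm x₁ x₃ i‖ = boundaryTerm ‖x₁‖ ‖x₃‖ i := by
  simp only [boundaryTerm, apply_ite norm, norm_mul, norm_pow, norm_zero]

lemma hasSum_boundaryTerm [CompleteSpace 𝕜] {x₁ x₃ : 𝕜} (h₁ : ‖x₁‖ < 1) (h₃ : ‖x₃‖ < 1) :
    HasSum (boundaryTerm x₁ x₃) ((1 - x₁)⁻¹ * (1 - x₃)⁻¹) := by
  have hinj : Function.Injective fun q : ℕ × ℕ => (q.1, 0, q.2) := by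
    rintro ⟨a, c⟩ ⟨a', c'⟩ h
    simpa using h
  rw [← hinj.hasSum_iff]
  · exact (hasSum_geometric_of_norm_lt_one h₁).mul (hasSum_geometric_of_norm_lt_one h₃)
      (summable_mul_of_summable_norm (summable_norm_geometric_of_norm_lt_one h₁)
        (summable_norm_geometric_of_norm_lt_one h₃))
  · rintro ⟨a, b, c⟩ h
    refine if_neg ?_
    rintro rfl
    exact h ⟨(a, c), rfl⟩

lemma summable_norm_boundaryTerm {x₁ x₃ : 𝕜} (h₁ : ‖x₁‖ < 1) (h₃ : ‖x₃‖ < 1) :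
    Summable fun i => ‖boundaryTerm x₁ x₃ i‖ := by
  simp only [norm_boundaryTerm]
  rw [← norm_norm] at h₁ h₃
  exact (hasSum_boundaryTerm h₁ h₃).summable

lemma hasSum_interiorTerm [CompleteSpace 𝕜] {x₁ x₂ x₃ : 𝕜}
    (hx : ‖x₁‖ + ‖x₂‖ + ‖x₃‖ < 1) :
    HasSum (interiorTerm x₁ x₂ x₃)
      (x₂ * ((1 - x₁)⁻¹ * (1 - x₃)⁻¹) / (1 - (x₁ + x₂ + x₃))) := by
  have h₁ : ‖x₁‖ < 1 := by linarith [norm_nonneg x₂, norm_nonneg x₃]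
  have h₃ : ‖x₃‖ < 1 := by linarith [norm_nonneg x₁, norm_nonneg x₂]
  have hnorm : Summable fun i => ‖x₂ * boundaryTerm x₁ x₃ i‖ := by
    simpa only [norm_mul] using (summable_norm_boundaryTerm h₁ h₃).mul_left ‖x₂‖
  have hrec (i : ℕ × ℕ × ℕ) : interiorTerm x₁ x₂ x₃ i =
      ∑ k : Fin 3, ![x₁, x₂, x₃] k *
        shift (![(1, 0, 0), (0, 1, 0), (0, 0, 1)] k) (interiorTerm x₁ x₂ x₃) i +
          x₂ * boundaryTerm x₁ x₃ i := by
    rw [Fin.sum_univ_three]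
    exact interiorTerm_eq_add_shift x₁ x₂ x₃ i
  have hx' : ∑ k : Fin 3, ‖![x₁, x₂, x₃] k‖ < 1 := by
    rwa [Fin.sum_univ_three]
  have h := hasSum_of_eq_sum_shift hx' hnorm ((hasSum_boundaryTerm h₁ h₃).mul_left x₂) hrec
  rwa [Fin.sum_univ_three] at h

end Summation

theorem stmt_4_general {𝕜 : Type*} [NormedField 𝕜] [CompleteSpace 𝕜] {x₁ x₂ x₃ : 𝕜}
    (hx : ‖x₁‖ + ‖x₂‖ + ‖x₃‖ < 1) :
    HasSum
      (fun i : ℕ × ℕ × ℕ => (Omega [i.1, i.2.1, i.2.2] : 𝕜) * x₁ ^ i.1 * x₂ ^ i.2.1 * x₃ ^ i.2.2)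
      ((1 - x₁ - x₃) / ((1 - x₁) * (1 - x₃) * (1 - x₁ - x₂ - x₃))) := by
  have h₁ : ‖x₁‖ < 1 := by linarith [norm_nonneg x₂, norm_nonneg x₃]
  have h₃ : ‖x₃‖ < 1 := by linarith [norm_nonneg x₁, norm_nonneg x₂]
  have hne {y : 𝕜} (hy : ‖y‖ < 1) : 1 - y ≠ 0 := by
    rw [sub_ne_zero]
    rintro rfl
    simp at hy
  have hne₁₂₃ : 1 - (x₁ + x₂ + x₃) ≠ 0 := hne (norm_add₃_le.trans_lt hx)
  convert (hasSum_boundaryTerm h₁ h₃).add (hasSum_shift_iff.2 (hasSum_interiorTerm hx)) using 1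
  · exact funext (omegaTerm_eq_boundaryTerm_add x₁ x₂ x₃)
  · rw [show 1 - x₁ - x₂ - x₃ = 1 - (x₁ + x₂ + x₃) by ring]
    field_simp [hne h₁, hne h₃, hne₁₂₃]
    ring

theorem stmt_4 (x₁ x₂ x₃ : ℝ) (hx : |x₁| + |x₂| + |x₃| < 1) :
    ∑' i : ℕ × ℕ × ℕ,
        (Omega [i.1, i.2.1, i.2.2] : ℝ) * x₁ ^ i.1 * x₂ ^ i.2.1 * x₃ ^ i.2.2 =
      (1 - x₁ - x₃) / ((1 - x₁) * (1 - x₃) * (1 - x₁ - x₂ - x₃)) :=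
  (stmt_4_general hx).tsum_eq
end

section
/- For all real numbers x₁, x₂, x₃, x₄ with |x₁| + |x₂| + |x₃| + |x₄| < 1, one has Σ_{i₁,i₂,i₃,i₄ ≥ 0} Ω(i₁,i₂,i₃,i₄)·x₁^{i₁} x₂^{i₂} x₃^{i₃} x₄^{i₄} = (1/(1 − x₁ − x₂ − x₃ − x₄)) · [ (1 − x₁)(1 − x₁ − x₂ − x₄)/((1 − x₁ − x₂)(1 − x₁ − x₄)) + (1 − x₄)(1 − x₁ − x₃ − x₄)/((1 − x₁ − x₄)(1 − x₃ − x₄)) − 1 ]. -/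
/-!
Freeing the step between two consecutive blocks makes the permutations counted on its two sides
independent, which gives `Ω(a + 1, b, …) + Ω(a, b + 1, …) = C(N + 1, a + 1) Ω(b, …)`, where `N` is
the sum of the arguments of either term on the left. This recursion determines `Ω` with two, three
and four arguments. In particular, `Ω(a, b + 1, c + 1, d)` is
`C(N, a) Ω(b, c + 1, d) + C(N, d) Ω(a, b + 1, c)`, according to which of the two peaks carries the
largest value, and when one of the two inner blocks is empty, its neighbours merge into one block.

For the series, fix all exponents but the `i`-th, `r` being their sum. The negative binomial series
`∑ C(m + r + k, m) xᵢ ^ m = (1 - xᵢ) ^ (-(r + k + 1))` shows that multiplication of the coefficients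
by a binomial coefficient `C(m + r + k, m)` amounts to scaling the other variables by `(1 - xᵢ)⁻¹`,
so every series is obtained from the geometric one.
-/

section SignPatterns

open Finset Function

variable {α β : Type*} {m n : ℕ} {ε δ : ℕ → SignType}

/-- The sequence `f` obeys the sign pattern `ε`: it increases at step `j → j + 1` if `ε j = 1`,
decreases there if `ε j = -1`, and is unconstrained there if `ε j = 0`. -/
def FollowsSigns [LT α] (ε : ℕ → SignType) (f : Fin n → α) : Prop :=
  ∀ j, ∀ h : j + 1 < n,
    (ε j = 1 → f ⟨j, Nat.lt_of_succ_lt h⟩ < f ⟨j + 1, h⟩) ∧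
    (ε j = -1 → f ⟨j + 1, h⟩ < f ⟨j, Nat.lt_of_succ_lt h⟩)

/-- The number of permutations of `{0, …, n - 1}` that obey the sign pattern `ε`. -/
noncomputable def numFollowing (n : ℕ) (ε : ℕ → SignType) : ℕ :=
  Nat.card {τ : Equiv.Perm (Fin n) // FollowsSigns ε τ}

theorem followsSigns_congr [LT α] {f : Fin n → α} (h : ∀ j, j + 1 < n → ε j = δ j) :
    FollowsSigns ε f ↔ FollowsSigns δ f :=
  forall₂_congr fun j hj => by rw [h j hj]

theorem numFollowing_congr (h : ∀ j, j + 1 < n → ε j = δ j) :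
    numFollowing n ε = numFollowing n δ :=
  Nat.card_congr <| Equiv.subtypeEquivRight fun _ => followsSigns_congr h

theorem followsSigns_strictMono_comp_iff [LinearOrder α] [Preorder β] {g : α → β}
    (hg : StrictMono g) {f : Fin n → α} : FollowsSigns ε (g ∘ f) ↔ FollowsSigns ε f := by
  simp only [FollowsSigns, comp_apply, hg.lt_iff_lt]

theorem followsSigns_strictAnti_comp_iff [LinearOrder α] [Preorder β] {g : α → β}
    (hg : StrictAnti g) {f : Fin n → α} : FollowsSigns ε (g ∘ f) ↔ FollowsSigns (-ε) f := by
  refine forall₂_congr fun j _ => ?_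
  simp only [comp_apply, hg.lt_iff_gt, Pi.neg_apply, neg_eq_iff_eq_neg, neg_neg, and_comm]

theorem numFollowing_neg (n : ℕ) (ε : ℕ → SignType) :
    numFollowing n (-ε) = numFollowing n ε :=
  Nat.card_congr <| (Equiv.mulLeft Fin.revPerm).subtypeEquiv fun τ =>
    (followsSigns_strictAnti_comp_iff Fin.rev_strictAnti (f := τ)).symm

theorem numFollowing_one (n : ℕ) : numFollowing n 1 = 1 := by
  have strictMono_of_follows {τ : Equiv.Perm (Fin n)} (hτ : FollowsSigns 1 τ) : StrictMono τ := by
    cases n with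
    | zero => exact Subsingleton.strictMono _
    | succ n => exact Fin.strictMono_iff_lt_succ.2 fun i => (hτ i (by simp)).1 rfl
  rw [numFollowing, Nat.card_eq_one_iff_exists]
  refine ⟨⟨1, fun j h => ⟨fun _ => by simp, fun h => nomatch h⟩⟩, fun τ => ?_⟩
  exact Subtype.ext <| DFunLike.coe_injective <|
    ((strictMono_of_follows τ.2).range_inj strictMono_id).1 (by simp)

theorem followsSigns_update_one_iff [LT α] {f : Fin n → α} {j : ℕ} (hj : j + 1 < n)
    (hε : ε j = 0) :
    FollowsSigns (update ε j 1) f ↔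
      FollowsSigns ε f ∧ f ⟨j, Nat.lt_of_succ_lt hj⟩ < f ⟨j + 1, hj⟩ := by
  refine ⟨fun h => ⟨fun i hi => ?_, (h j hj).1 (by simp)⟩, fun h i hi => ?_⟩
  · by_cases hij : i = j
    · subst hij; simp [hε]
    · simpa [hij] using h i hi
  · by_cases hij : i = j
    · subst hij; simpa using h.2
    · simpa [hij] using h.1 i hi

theorem followsSigns_update_neg_one_iff [LinearOrder α] {f : Fin n → α} {j : ℕ} (hj : j + 1 < n)
    (hε : ε j = 0) :
    FollowsSigns (update ε j (-1)) f ↔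
      FollowsSigns ε f ∧ f ⟨j + 1, hj⟩ < f ⟨j, Nat.lt_of_succ_lt hj⟩ := by
  have h := followsSigns_update_one_iff (ε := -ε) (f := OrderDual.toDual ∘ f) hj (by simp [hε])
  have hdual : StrictAnti (OrderDual.toDual : α → αᵒᵈ) := fun _ _ h => h
  rw [followsSigns_strictAnti_comp_iff hdual, followsSigns_strictAnti_comp_iff hdual, neg_neg] at h
  have hup : update ε j (-1) = -update (-ε) j 1 := by
    ext i
    by_cases hij : i = j <;> simp [hij]
  rw [hup]
  exact h

theorem numFollowing_eq_add_of_eq_zero {j : ℕ} (hj : j + 1 < n) (hε : ε j = 0) :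
    numFollowing n ε = numFollowing n (update ε j 1) + numFollowing n (update ε j (-1)) := by
  classical
  simp only [numFollowing, followsSigns_update_one_iff hj hε,
    followsSigns_update_neg_one_iff hj hε, Nat.card_eq_fintype_card]
  rw [← Fintype.card_subtype_or_disjoint]
  · refine Fintype.card_congr <| Equiv.subtypeEquivRight fun τ => ?_
    have hne : τ ⟨j, Nat.lt_of_succ_lt hj⟩ ≠ τ ⟨j + 1, hj⟩ := τ.injective.ne (by simp)
    exact (and_iff_left hne.lt_or_gt).symm.trans and_or_left
  · exact Pi.disjoint_iff.2 fun τ => Prop.disjoint_iff.2 fun h => lt_asymm h.1.2 h.2.2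

theorem followsSigns_append_iff [LT α] {f : Fin (m + 1 + n) → α} (hε : ε m = 0) :
    FollowsSigns ε f ↔ FollowsSigns ε (f ∘ Fin.castAdd n) ∧
      FollowsSigns (fun j => ε (m + 1 + j)) (f ∘ Fin.natAdd (m + 1)) := by
  constructor
  · exact fun h => ⟨fun j hj => h j (by omega), fun j hj => h (m + 1 + j) (by omega)⟩
  · rintro ⟨hl, hr⟩ j hj
    rcases lt_trichotomy j m with hjm | rfl | hjm
    · exact hl j (by omega)
    · simp [hε]
    · obtain ⟨i, rfl⟩ := Nat.exists_eq_add_of_le (show m + 1 ≤ j from hjm)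
      exact hr i (by omega)

/-- The permutation of `Fin (m + n)` that arranges the elements of `s` in the first `m` positions
in the relative order `σ`, and those of `sᶜ` in the last `n` positions in the relative order `ρ`. -/
noncomputable def gluePerm (s : {s : Finset (Fin (m + n)) // #s = m}) (σ : Equiv.Perm (Fin m))
    (ρ : Equiv.Perm (Fin n)) : Equiv.Perm (Fin (m + n)) :=
  finSumFinEquiv.symm.trans <| (σ.sumCongr ρ).trans <|
    finSumEquivOfFinset (s := s.1) (n := n) s.2 (by rw [card_compl, s.2]; simp)

theorem gluePerm_comp_castAdd (s : {s : Finset (Fin (m + n)) // #s = m}) (σ : Equiv.Perm (Fin m))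
    (ρ : Equiv.Perm (Fin n)) : gluePerm s σ ρ ∘ Fin.castAdd n = s.1.orderEmbOfFin s.2 ∘ σ := by
  ext i; simp [gluePerm]

theorem gluePerm_comp_natAdd (s : {s : Finset (Fin (m + n)) // #s = m}) (σ : Equiv.Perm (Fin m))
    (ρ : Equiv.Perm (Fin n)) :
    gluePerm s σ ρ ∘ Fin.natAdd m =
      s.1ᶜ.orderEmbOfFin (by rw [card_compl, s.2]; simp) ∘ ρ := by
  ext i; simp [gluePerm]

theorem gluePerm_injective : Injective fun p : {s : Finset (Fin (m + n)) // #s = m} ×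
    Equiv.Perm (Fin m) × Equiv.Perm (Fin n) => gluePerm p.1 p.2.1 p.2.2 := by
  rintro ⟨s, σ, ρ⟩ ⟨t, σ', ρ'⟩ h
  have hleft : s.1.orderEmbOfFin s.2 ∘ σ = t.1.orderEmbOfFin t.2 ∘ σ' := by
    rw [← gluePerm_comp_castAdd s σ ρ, ← gluePerm_comp_castAdd t σ' ρ']
    exact congrArg (fun τ : Equiv.Perm _ => τ ∘ Fin.castAdd n) h
  have hright := gluePerm_comp_natAdd s σ ρ
  rw [show gluePerm s σ ρ = gluePerm t σ' ρ' from h, gluePerm_comp_natAdd t σ' ρ'] at hright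
  obtain rfl : s = t := by
    have hrange := congrArg Set.range hleft
    rw [EquivLike.range_comp, EquivLike.range_comp, range_orderEmbOfFin, range_orderEmbOfFin,
      coe_inj] at hrange
    exact Subtype.ext hrange
  obtain rfl : σ = σ' := DFunLike.coe_injective <|
    (OrderEmbedding.strictMono _).injective.comp_left hleft
  obtain rfl : ρ' = ρ := DFunLike.coe_injective <|
    (OrderEmbedding.strictMono _).injective.comp_left hright
  rfl

theorem gluePerm_bijective : Bijective fun p : {s : Finset (Fin (m + n)) // #s = m} ×
    Equiv.Perm (Fin m) × Equiv.Perm (Fin n) => gluePerm p.1 p.2.1 p.2.2 := by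
  rw [Fintype.bijective_iff_injective_and_card]
  refine ⟨gluePerm_injective, ?_⟩
  simp only [Fintype.card_prod, Fintype.card_finset_len, Fintype.card_perm, Fintype.card_fin]
  rw [← Nat.add_choose_mul_factorial_mul_factorial m n, Nat.choose_symm_add, mul_assoc]

theorem followsSigns_gluePerm_iff (hε : ε m = 0)
    (s : {s : Finset (Fin (m + 1 + n)) // #s = m + 1}) (σ : Equiv.Perm (Fin (m + 1)))
    (ρ : Equiv.Perm (Fin n)) :
    FollowsSigns ε (gluePerm s σ ρ) ↔
      FollowsSigns ε σ ∧ FollowsSigns (fun j => ε (m + 1 + j)) ρ := by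
  rw [followsSigns_append_iff hε, gluePerm_comp_castAdd, gluePerm_comp_natAdd,
    followsSigns_strictMono_comp_iff (OrderEmbedding.strictMono _),
    followsSigns_strictMono_comp_iff (OrderEmbedding.strictMono _)]

theorem numFollowing_add_of_eq_zero (hε : ε m = 0) :
    numFollowing (m + 1 + n) ε = (m + 1 + n).choose (m + 1) *
      (numFollowing (m + 1) ε * numFollowing n fun j => ε (m + 1 + j)) := by
  let glueEquiv := Equiv.ofBijective _ (gluePerm_bijective (m := m + 1) (n := n))
  have followsEquiv : {τ : Equiv.Perm (Fin (m + 1 + n)) // FollowsSigns ε τ} ≃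
      {s : Finset (Fin (m + 1 + n)) // #s = m + 1} ×
        {σ : Equiv.Perm (Fin (m + 1)) // FollowsSigns ε σ} ×
          {ρ : Equiv.Perm (Fin n) // FollowsSigns (fun j => ε (m + 1 + j)) ρ} :=
    (glueEquiv.subtypeEquiv fun p =>
      (followsSigns_gluePerm_iff hε p.1 p.2.1 p.2.2).symm).symm.trans
      { toFun p := ⟨p.1.1, ⟨p.1.2.1, p.2.1⟩, ⟨p.1.2.2, p.2.2⟩⟩
        invFun q := ⟨⟨q.1, q.2.1.1, q.2.2.1⟩, q.2.1.2, q.2.2.2⟩ }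
  rw [numFollowing, Nat.card_congr followsEquiv, Nat.card_prod, Nat.card_prod,
    Nat.card_eq_fintype_card (α := {s : Finset _ // _}), Fintype.card_finset_len, Fintype.card_fin]
  rfl

end SignPatterns

section Omega

open Function

/-- The sign pattern prescribed by the block lengths `l`: `l[0]` ascents, then `l[1]` descents,
then `l[2]` ascents, and so on; positions beyond all blocks get the sign `0`. -/
def blockSign : List ℕ → ℕ → SignType
  | [], _ => 0
  | a :: l, j => if j < a then 1 else -blockSign l (j - a)

theorem blockSign_of_mem_block {l : List ℕ} {k j : ℕ} (hk : k < l.length)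
    (hle : (l.take k).sum ≤ j) (hlt : j < (l.take (k + 1)).sum) :
    blockSign l j = (-1) ^ k := by
  induction l generalizing k j with
  | nil => simp at hk
  | cons a l ih =>
    cases k with
    | zero => simp_all [blockSign]
    | succ k =>
      simp only [List.take_succ_cons, List.sum_cons, List.length_cons] at hk hle hlt
      rw [blockSign, if_neg (by omega), ih (k := k) (by omega) (by omega) (by omega), pow_succ,
        mul_neg_one]

theorem exists_mem_block {l : List ℕ} {j : ℕ} (hj : j < l.sum) :
    ∃ k < l.length, (l.take k).sum ≤ j ∧ j < (l.take (k + 1)).sum := by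
  induction l generalizing j with
  | nil => simp at hj
  | cons a l ih =>
    by_cases hja : j < a
    · exact ⟨0, by simp, by simp, by simpa⟩
    · simp only [List.sum_cons] at hj
      obtain ⟨k, hk, hle, hlt⟩ := ih (j := j - a) (by omega)
      refine ⟨k + 1, by simpa, ?_, ?_⟩ <;>
        simp only [List.take_succ_cons, List.sum_cons] <;> omega

theorem monotCond_iff_followsSigns (l : List ℕ) (τ : Equiv.Perm (Fin (l.sum + 1))) :
    MonotCond l τ ↔ FollowsSigns (blockSign l) τ := by
  have neg_one_pow_eq (k : ℕ) : (-1 : SignType) ^ k = if k % 2 = 0 then 1 else -1 := by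
    rw [neg_one_pow_eq_ite]; simp [Nat.even_iff]
  constructor
  · intro h j hj
    obtain ⟨k, hk, hle, hlt⟩ := exists_mem_block (Nat.lt_of_succ_lt_succ hj)
    have hτ := h k hk j hle hlt hj
    rw [blockSign_of_mem_block hk hle hlt, neg_one_pow_eq]
    split_ifs at hτ ⊢ <;> simpa using hτ
  · intro h k hk j hle hlt hj
    have hτ := h j hj
    rw [blockSign_of_mem_block hk hle hlt, neg_one_pow_eq] at hτ
    split_ifs at hτ ⊢
    · exact hτ.1 rfl
    · exact hτ.2 rfl

theorem omega_eq_numFollowing (l : List ℕ) :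
    Omega l = numFollowing (l.sum + 1) (blockSign l) :=
  Nat.card_congr <| Equiv.subtypeEquivRight <| monotCond_iff_followsSigns l

theorem omega_singleton (a : ℕ) : Omega [a] = 1 := by
  refine (omega_eq_numFollowing [a]).trans <|
    (numFollowing_congr fun j hj => ?_).trans (numFollowing_one _)
  rw [blockSign, if_pos (by simpa using hj), Pi.one_apply]

theorem omega_zero_cons (l : List ℕ) : Omega (0 :: l) = Omega l := by
  rw [omega_eq_numFollowing, omega_eq_numFollowing, ← numFollowing_neg _ (blockSign l),
    List.sum_cons, zero_add]
  rfl

theorem blockSign_append_zero (l : List ℕ) : blockSign (l ++ [0]) = blockSign l := by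
  induction l with
  | nil => rfl
  | cons a l ih => funext j; simp only [List.cons_append, blockSign, ih]

theorem omega_append_zero (l : List ℕ) : Omega (l ++ [0]) = Omega l := by
  simp only [omega_eq_numFollowing, blockSign_append_zero, List.sum_append, List.sum_singleton,
    add_zero]

theorem blockSign_append_cons_zero_cons (l r : List ℕ) (a b : ℕ) :
    blockSign (l ++ a :: 0 :: b :: r) = blockSign (l ++ (a + b) :: r) := by
  induction l with
  | nil =>
    funext j
    simp only [List.nil_append, blockSign]
    split_ifs <;> first | omega | simp [Nat.sub_sub]
  | cons c l ih => funext j; simp only [List.cons_append, blockSign, ih]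

theorem omega_append_cons_zero_cons (l r : List ℕ) (a b : ℕ) :
    Omega (l ++ a :: 0 :: b :: r) = Omega (l ++ (a + b) :: r) := by
  simp only [omega_eq_numFollowing, blockSign_append_cons_zero_cons, List.sum_append,
    List.sum_cons, zero_add, add_assoc]

theorem update_blockSign_succ_cons (a b : ℕ) (l : List ℕ) :
    update (blockSign ((a + 1) :: b :: l)) a (-1) = blockSign (a :: (b + 1) :: l) := by
  funext j
  rcases lt_trichotomy j a with h | rfl | h
  · rw [update_of_ne h.ne, blockSign, if_pos (by omega), blockSign, if_pos h]
  · simp [blockSign]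
  · rw [update_of_ne h.ne']
    simp only [blockSign, if_neg h.not_gt, if_neg (show ¬ j < a + 1 by omega),
      show j - (a + 1) < b ↔ j - a < b + 1 by omega,
      show j - (a + 1) - b = j - a - (b + 1) by omega]

/- Both counts on the left fix the sign of the step after the first `a` ascents; without that
constraint the two sides of the step are independent of each other. -/
theorem omega_succ_cons_add_omega_cons_succ (a b : ℕ) (l : List ℕ) :
    Omega ((a + 1) :: b :: l) + Omega (a :: (b + 1) :: l) =
      (a + b + l.sum + 2).choose (a + 1) * Omega (b :: l) := by
  let ε : ℕ → SignType := update (blockSign ((a + 1) :: b :: l)) a 0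
  have hε : ε a = 0 := update_self a 0 _
  have hε_of_ne {j : ℕ} (hj : j ≠ a) : ε j = blockSign ((a + 1) :: b :: l) j :=
    update_of_ne hj _ _
  have hup : update ε a 1 = blockSign ((a + 1) :: b :: l) := by
    simp [ε, update_idem, blockSign]
  have hdown : update ε a (-1) = blockSign (a :: (b + 1) :: l) := by
    rw [update_idem, update_blockSign_succ_cons]
  have hleft : numFollowing (a + 1) ε = 1 := by
    refine (numFollowing_congr fun j hj => ?_).trans (numFollowing_one _)
    rw [hε_of_ne (by omega), blockSign, if_pos (by omega), Pi.one_apply]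
  have hright : (fun j => ε (a + 1 + j)) = -blockSign (b :: l) := by
    funext j
    rw [Pi.neg_apply, hε_of_ne (by omega), blockSign, if_neg (by omega), Nat.add_sub_cancel_left]
  have hsplit := numFollowing_eq_add_of_eq_zero (n := a + 1 + (b + l.sum + 1)) (j := a)
    (by omega) hε
  rw [hup, hdown, numFollowing_add_of_eq_zero hε, hleft, hright, one_mul, numFollowing_neg]
    at hsplit
  simp only [omega_eq_numFollowing, List.sum_cons,
    show a + b + l.sum + 2 = a + 1 + (b + l.sum + 1) by omega]
  rw [hsplit]
  congr 2
  omega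

end Omega

section FewBlocks

open Finset

theorem omega_pair (a b : ℕ) : Omega [a, b] = (a + b).choose a := by
  induction a generalizing b with
  | zero => rw [omega_zero_cons, omega_singleton, Nat.choose_zero_right]
  | succ a ih =>
    have hrec := omega_succ_cons_add_omega_cons_succ a b []
    have hpascal := Nat.choose_succ_succ' (a + b + 1) a
    rw [ih, omega_singleton, List.sum_nil, mul_one, add_zero, ← add_assoc] at hrec
    rw [add_right_comm]
    lia

theorem omega_triple_succ_right (a b c : ℕ) :
    Omega [a, b, c + 1] =
      Omega [a, b, c] + (a + b + c + 1).choose a * (b + c).choose (c + 1) := by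
  have hsymm : (b + c + 1).choose b = (b + c + 1).choose (c + 1) :=
    Nat.choose_symm_add (b := c + 1)
  have hpascal := Nat.choose_succ_succ' (b + c) c
  induction a generalizing b with
  | zero =>
    simp only [omega_zero_cons, omega_pair, ← add_assoc, Nat.choose_zero_right, one_mul]
    rw [hsymm, hpascal, Nat.choose_symm_add]
  | succ a ih =>
    have hrec := omega_succ_cons_add_omega_cons_succ a b [c]
    have hrec' := omega_succ_cons_add_omega_cons_succ a b [c + 1]
    have ih' := ih (b + 1) (Nat.choose_symm_add (b := c + 1)) (Nat.choose_succ_succ' _ c)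
    have hpascal' := Nat.choose_succ_succ' (a + b + c + 2) a
    rw [List.sum_singleton, omega_pair, Nat.choose_symm_add] at hrec
    rw [List.sum_singleton, omega_pair, ← add_assoc b, hsymm] at hrec'
    rw [show a + 1 + b + c + 1 = a + b + c + 2 by ring]
    rw [show a + (b + 1) + c + 1 = a + b + c + 2 by ring, add_right_comm b] at ih'
    rw [show a + b + (c + 1) + 2 = a + b + c + 2 + 1 by ring] at hrec'
    zify at *
    linear_combination hrec' - hrec - ih' + ((b + c + 1).choose (c + 1) : ℤ) * hpascal' +
      ((a + b + c + 2).choose (a + 1) : ℤ) * hpascal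

/- Both sides count the ways to split `a + b + c` objects into groups of sizes `a`, `b`, `c`. -/
theorem choose_mul_choose_comm (a b c : ℕ) :
    (a + b + c).choose a * (b + c).choose c = (a + b + c).choose c * (a + b).choose a := by
  have h := Nat.choose_mul (n := a + b + c) (Nat.le_add_left c b)
  rwa [Nat.add_sub_cancel, Nat.add_sub_cancel, ← Nat.choose_symm_add (a := a),
    ← Nat.choose_symm_of_eq_add (show a + b + c = a + (b + c) by ring)] at h

theorem omega_triple_succ_left (a b c : ℕ) :
    Omega [a + 1, b + 1, c] =
      Omega [a, b + 1, c] + (a + b + c + 2).choose c * (a + b + 1).choose b := by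
  induction c with
  | zero =>
    have hdrop (a : ℕ) : Omega [a, b + 1, 0] = Omega [a, b + 1] := omega_append_zero [a, b + 1]
    have hpascal := Nat.choose_succ_succ' (a + b + 1) b
    rw [hdrop, hdrop, omega_pair, omega_pair, Nat.choose_symm_add, Nat.choose_symm_add,
      Nat.choose_zero_right, one_mul, ← add_assoc, ← add_assoc, add_right_comm a, hpascal,
      add_comm]
  | succ c ih =>
    have htrinomial := choose_mul_choose_comm (a + 1) b (c + 1)
    have hpascal := Nat.choose_succ_succ' (a + b + c + 2) c
    have hpascal' := Nat.choose_succ_succ' (a + b + c + 2) a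
    rw [Nat.choose_symm_add (a := a + 1), show a + 1 + b + (c + 1) = a + b + c + 2 by ring,
      add_right_comm a 1, ← add_assoc] at htrinomial
    rw [omega_triple_succ_right, omega_triple_succ_right, ih,
      show a + 1 + (b + 1) + c + 1 = a + b + c + 2 + 1 by ring,
      show a + (b + 1) + c + 1 = a + b + c + 2 by ring,
      show a + b + (c + 1) + 2 = a + b + c + 2 + 1 by ring, add_right_comm b, hpascal, hpascal']
    linear_combination htrinomial

theorem omega_triple_eq_sum (a b c : ℕ) :
    Omega [a, b + 1, c] = ∑ j ∈ range (c + 1), (a + b + j + 1).choose a * (b + j).choose j := by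
  induction c with
  | zero =>
    rw [show Omega [a, b + 1, 0] = Omega [a, b + 1] from omega_append_zero [a, b + 1], omega_pair]
    simp [add_assoc]
  | succ c ih =>
    rw [omega_triple_succ_right, ih, sum_range_succ _ (c + 1),
      show a + (b + 1) + c + 1 = a + b + (c + 1) + 1 by ring, add_right_comm b, add_assoc b]

/- The two summands count the permutations whose largest value is at the first, respectively the
second, of the two peaks. -/
theorem omega_quadruple (a b c d : ℕ) :
    Omega [a, b + 1, c + 1, d] =
      (a + b + c + d + 2).choose a * Omega [b, c + 1, d] +
        (a + b + c + d + 2).choose d * Omega [a, b + 1, c] := by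
  induction a generalizing b with
  | zero =>
    rw [omega_zero_cons, omega_zero_cons, omega_pair, omega_triple_succ_left, Nat.choose_zero_right,
      one_mul, zero_add, Nat.choose_symm_add, add_right_comm b 1]
  | succ a ih =>
    have hrec := omega_succ_cons_add_omega_cons_succ a (b + 1) [c + 1, d]
    have hrec' := omega_succ_cons_add_omega_cons_succ a (b + 1) [c]
    have ih' := ih (b + 1)
    have hpascal := Nat.choose_succ_succ' (a + b + c + d + 3) a
    have htrinomial := choose_mul_choose_comm (a + 1) (b + c + 2) d
    have hpeak := omega_triple_succ_left b c d
    rw [show a + 1 + (b + c + 2) + d = a + b + c + d + 3 by ring,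
      show b + c + 2 + d = b + c + d + 2 by ring,
      show a + 1 + (b + c + 2) = a + b + c + 3 by ring] at htrinomial
    simp only [List.sum_cons, List.sum_nil, omega_pair] at hrec hrec'
    rw [show a + (b + 1) + (c + 1 + (d + 0)) + 2 = a + b + c + d + 3 + 1 by ring] at hrec
    rw [show a + (b + 1) + (c + 0) + 2 = a + b + c + 3 by ring, Nat.choose_symm_add,
      add_right_comm b 1 c] at hrec'
    rw [show a + (b + 1) + c + d + 2 = a + b + c + d + 3 by ring] at ih'
    rw [show a + 1 + b + c + d + 2 = a + b + c + d + 3 by ring]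
    zify at *
    linear_combination hrec - ih' + (Omega [b + 1, c + 1, d] : ℤ) * hpascal
      + ((a + b + c + d + 3).choose (a + 1) : ℤ) * hpeak
      - ((a + b + c + d + 3).choose d : ℤ) * hrec'
      + ((b + c + 1).choose c : ℤ) * htrinomial

theorem omega_quadruple_second_zero (a c d : ℕ) : Omega [a, 0, c, d] = (a + c + d).choose d := by
  rw [← Nat.choose_symm_add, ← omega_pair]
  exact omega_append_cons_zero_cons [] [d] a c

theorem omega_quadruple_third_zero (a b d : ℕ) : Omega [a, b, 0, d] = (a + b + d).choose a := by
  rw [add_assoc, ← omega_pair]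
  exact omega_append_cons_zero_cons [a] [] b d

end FewBlocks

section GeneratingFunctions

open Finset Function

variable {n : ℕ}

/-- The function `F` is the sum of the power series `∑ c(s) x^s` in `n` variables on the open
`ℓ¹` unit ball. The coefficients are natural numbers, so that convergence at `|x|` is absolute
convergence at `x`. -/
def HasGenFun (c : (Fin n → ℕ) → ℕ) (F : (Fin n → ℝ) → ℝ) : Prop :=
  ∀ x, ∑ i, |x i| < 1 → HasSum (fun s => (c s : ℝ) * ∏ i, x i ^ s i) (F x)

theorem abs_lt_one_of_sum_abs_lt_one {x : Fin n → ℝ} (hx : ∑ j, |x j| < 1) (i : Fin n) :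
    |x i| < 1 :=
  (single_le_sum (fun j _ => abs_nonneg (x j)) (mem_univ i)).trans_lt hx

theorem sum_abs_removeNth_lt {x : Fin (n + 1) → ℝ} (hx : ∑ j, |x j| < 1) (i : Fin (n + 1)) :
    ∑ j, |i.removeNth x j| < 1 - |x i| := by
  rw [Fin.sum_univ_succAbove _ i] at hx
  exact lt_sub_iff_add_lt'.2 hx

namespace HasGenFun

variable {c d : (Fin n → ℕ) → ℕ} {F G : (Fin n → ℝ) → ℝ}

protected theorem add (hF : HasGenFun c F) (hG : HasGenFun d G) :
    HasGenFun (fun s => c s + d s) (fun x => F x + G x) := fun x hx => by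
  simpa only [Nat.cast_add, add_mul] using (hF x hx).add (hG x hx)

protected theorem congr (hF : HasGenFun c F) (hc : ∀ s, d s = c s)
    (hG : ∀ x, ∑ i, |x i| < 1 → G x = F x) : HasGenFun d G := fun x hx => by
  simpa only [hc, hG x hx] using hF x hx

/-- The `m`-th term of the fibre over `r` of the power series with coefficients `c`, in which the
exponent of the `i`-th variable is `m` and the other exponents are given by `r`. -/
def fiberTerm (c : (Fin (n + 1) → ℕ) → ℕ) (i : Fin (n + 1)) (x : Fin (n + 1) → ℝ) (r : Fin n → ℕ) :
    ℕ → ℝ :=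
  fun m => c (i.insertNth m r) * (x i ^ m * ∏ j, i.removeNth x j ^ r j)

theorem hasSum_fiberTerm_iff {c : (Fin (n + 1) → ℕ) → ℕ} (i : Fin (n + 1)) {x : Fin (n + 1) → ℝ}
    {y : ℝ} :
    HasSum (fun p : (Fin n → ℕ) × ℕ => fiberTerm c i x p.1 p.2) y ↔
      HasSum (fun s => (c s : ℝ) * ∏ j, x j ^ s j) y := by
  rw [← ((Equiv.prodComm _ _).trans (Fin.insertNthEquiv (fun _ => ℕ) i)).hasSum_iff]
  simp [fiberTerm, comp_def, Fin.prod_univ_succAbove _ i, Fin.insertNthEquiv, Fin.removeNth_apply]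

theorem of_fiberwise {c : (Fin (n + 1) → ℕ) → ℕ} {F : (Fin (n + 1) → ℝ) → ℝ} (i : Fin (n + 1))
    (φ : (Fin (n + 1) → ℝ) → (Fin n → ℕ) → ℝ)
    (hfiber : ∀ x, ∑ j, |x j| < 1 → ∀ r, HasSum (fiberTerm c i x r) (φ x r))
    (hsum : ∀ x, ∑ j, |x j| < 1 → HasSum (φ x) (F x)) : HasGenFun c F := by
  intro x hx
  have habs : ∑ j, |(|x j|)| < 1 := by simpa only [abs_abs]
  have hsummable : Summable fun p : (Fin n → ℕ) × ℕ => fiberTerm c i x p.1 p.2 := by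
    refine .of_norm_bounded (g := fun p => fiberTerm c i (fun j => |x j|) p.1 p.2) ?_ fun p => by
      simp [fiberTerm, Fin.removeNth_apply]
    rw [summable_prod_of_nonneg fun p => by
      simp only [fiberTerm, Fin.removeNth_apply, Pi.zero_apply]; positivity]
    refine ⟨fun r => (hfiber _ habs r).summable, ?_⟩
    simpa only [fun r => (hfiber _ habs r).tsum_eq] using (hsum _ habs).summable
  have hF := (hsummable.hasSum.prod_fiberwise (hfiber x hx)).unique (hsum x hx)
  exact (hasSum_fiberTerm_iff i).1 (hF ▸ hsummable.hasSum)

theorem summable_fiberTerm {c : (Fin (n + 1) → ℕ) → ℕ} {F : (Fin (n + 1) → ℝ) → ℝ}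
    (h : HasGenFun c F) (i : Fin (n + 1)) {x : Fin (n + 1) → ℝ} (hx : ∑ j, |x j| < 1)
    (r : Fin n → ℕ) : Summable (fiberTerm c i x r) :=
  ((hasSum_fiberTerm_iff i).2 (h x hx)).summable.prod_factor r

theorem hasSum_tsum_fiberTerm {c : (Fin (n + 1) → ℕ) → ℕ} {F : (Fin (n + 1) → ℝ) → ℝ}
    (h : HasGenFun c F) (i : Fin (n + 1)) {x : Fin (n + 1) → ℝ} (hx : ∑ j, |x j| < 1) :
    HasSum (fun r => ∑' m, fiberTerm c i x r m) (F x) :=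
  ((hasSum_fiberTerm_iff i).2 (h x hx)).prod_fiberwise fun r =>
    (h.summable_fiberTerm i hx r).hasSum

theorem one (n : ℕ) : HasGenFun (n := n) (fun _ => 1) (fun x => ∏ i, (1 - x i)⁻¹) := by
  induction n with
  | zero => intro x _; simp
  | succ n ih =>
    refine of_fiberwise 0 (fun x r => (1 - x 0)⁻¹ * ∏ j, Fin.removeNth 0 x j ^ r j) ?_ ?_
    · intro x hx r
      unfold fiberTerm
      simpa only [Nat.cast_one, one_mul] using
        (hasSum_geometric_of_abs_lt_one (abs_lt_one_of_sum_abs_lt_one hx 0)).mul_right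
          (∏ j, Fin.removeNth 0 x j ^ r j)
    · intro x hx
      have htail := ih (Fin.removeNth 0 x)
        ((sum_abs_removeNth_lt hx 0).trans_le (by simp))
      rw [Fin.prod_univ_succ]
      simpa [Fin.removeNth_apply] using htail.mul_left (1 - x 0)⁻¹

theorem choose_mul (h : HasGenFun c F) (i : Fin (n + 1)) (k : ℕ) :
    HasGenFun (fun s => (∑ j, s j + k).choose (s i) * c (i.removeNth s))
      (fun x => (1 - x i)⁻¹ ^ (k + 1) * F ((1 - x i)⁻¹ • i.removeNth x)) := by
  refine of_fiberwise i (fun x r => (1 - x i)⁻¹ ^ (k + 1) *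
    (c r * ∏ j, ((1 - x i)⁻¹ • i.removeNth x) j ^ r j)) ?_ ?_
  · intro x hx r
    have hgeom := hasSum_choose_mul_geometric_of_norm_lt_one (∑ j, r j + k)
      (show ‖x i‖ < 1 from abs_lt_one_of_sum_abs_lt_one hx i)
    convert! hgeom.mul_left (c r * ∏ j, i.removeNth x j ^ r j) using 1
    · funext m
      have hchoose : (m + ∑ j, r j + k).choose m = (m + (∑ j, r j + k)).choose (∑ j, r j + k) := by
        rw [add_assoc, Nat.choose_symm_add]
      simp only [fiberTerm, Fin.sum_univ_succAbove _ i, Fin.insertNth_apply_same,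
        Fin.insertNth_apply_succAbove, Fin.removeNth_insertNth, hchoose]
      push_cast
      ring
    · simp only [Pi.smul_apply, smul_eq_mul, mul_pow, prod_mul_distrib, prod_pow_eq_pow_sum,
        one_div, ← inv_pow]
      ring
  · intro x hx
    have hpos : 0 < 1 - x i := sub_pos.2 (abs_lt.1 (abs_lt_one_of_sum_abs_lt_one hx i)).2
    refine (h _ ?_).mul_left _
    simp only [Pi.smul_apply, smul_eq_mul, abs_mul, abs_inv, abs_of_pos hpos]
    rw [← mul_sum, inv_mul_lt_one₀ hpos]
    linarith [sum_abs_removeNth_lt hx i, le_abs_self (x i)]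

theorem sum_range {c : (Fin (n + 1) → ℕ) → ℕ} {F : (Fin (n + 1) → ℝ) → ℝ} (h : HasGenFun c F)
    (i : Fin (n + 1)) :
    HasGenFun (fun s => ∑ m ∈ range (s i + 1), c (update s i m))
      (fun x => F x * (1 - x i)⁻¹) := by
  refine of_fiberwise i (fun x r => (∑' m, fiberTerm c i x r m) * (1 - x i)⁻¹) ?_ fun x hx =>
    (h.hasSum_tsum_fiberTerm i hx).mul_right _
  intro x hx r
  have hgeom := hasSum_geometric_of_abs_lt_one (abs_lt_one_of_sum_abs_lt_one hx i)
  rw [← hgeom.tsum_eq]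
  refine (hasSum_sum_range_mul_of_summable_norm (h.summable_fiberTerm i hx r).norm
    hgeom.summable.norm).congr_fun fun m => ?_
  rw [fiberTerm, Nat.cast_sum, sum_mul, Fin.insertNth_apply_same]
  refine sum_congr rfl fun k hk => ?_
  rw [Fin.update_insertNth, fiberTerm, ← pow_mul_pow_sub (x i) (Nat.lt_succ_iff.1 (mem_range.1 hk))]
  ring

theorem fiberTerm_succ (c : (Fin (n + 1) → ℕ) → ℕ) (i : Fin (n + 1)) (x : Fin (n + 1) → ℝ)
    (r : Fin n → ℕ) (m : ℕ) :
    fiberTerm c i x r (m + 1) =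
      x i * fiberTerm (fun s => c (update s i (s i + 1))) i x r m := by
  simp only [fiberTerm, Fin.insertNth_apply_same, Fin.update_insertNth, pow_succ]
  ring

theorem of_zero_succ {c : (Fin (n + 1) → ℕ) → ℕ} {G : (Fin (n + 1) → ℝ) → ℝ} (i : Fin (n + 1))
    (hzero : HasGenFun (fun r => c (i.insertNth 0 r)) F)
    (hsucc : HasGenFun (fun s => c (update s i (s i + 1))) G) :
    HasGenFun c (fun x => F (i.removeNth x) + x i * G x) := by
  refine of_fiberwise i (fun x r => fiberTerm c i x r 0 +
    x i * ∑' m, fiberTerm (fun s => c (update s i (s i + 1))) i x r m) ?_ ?_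
  · intro x hx r
    refine HasSum.zero_add ?_
    simpa only [fiberTerm_succ] using (hsucc.summable_fiberTerm i hx r).hasSum.mul_left (x i)
  · intro x hx
    refine .add ?_ ((hsucc.hasSum_tsum_fiberTerm i hx).mul_left (x i))
    simpa only [fiberTerm, pow_zero, one_mul] using hzero (i.removeNth x)
      ((sum_abs_removeNth_lt hx i).trans_le (by simp))

end HasGenFun

end GeneratingFunctions

section OmegaGenFun

open Finset Function

theorem one_sub_ne_zero {n : ℕ} {x : Fin n → ℝ} (hx : ∑ j, |x j| < 1) (i : Fin n) :
    1 - x i ≠ 0 :=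
  sub_ne_zero.2 (abs_lt.1 (abs_lt_one_of_sum_abs_lt_one hx i)).2.ne'

theorem one_sub_sub_ne_zero {n : ℕ} {x : Fin n → ℝ} (hx : ∑ j, |x j| < 1) {i j : Fin n}
    (hij : i ≠ j) : 1 - x i - x j ≠ 0 := by
  have hle : |x i| + |x j| ≤ ∑ k, |x k| :=
    add_le_sum (fun k _ => abs_nonneg (x k)) (mem_univ i) (mem_univ j) hij
  have hpos : 0 < 1 - x i - x j := by linarith [le_abs_self (x i), le_abs_self (x j)]
  exact hpos.ne'

theorem hasGenFun_choose_two :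
    HasGenFun (fun s : Fin 2 → ℕ => (s 0 + s 1).choose (s 1)) fun x => (1 - x 0 - x 1)⁻¹ := by
  refine ((HasGenFun.one 1).choose_mul 1 0).congr (fun s => ?_) fun x hx => ?_
  · simp
  · have hne := one_sub_ne_zero hx 1
    simp only [Fin.prod_univ_one]
    change _ = (1 - x 1)⁻¹ ^ 1 * (1 - (1 - x 1)⁻¹ * x 0)⁻¹
    field_simp
    ring_nf

theorem hasGenFun_choose_mul_choose :
    HasGenFun (fun s : Fin 3 → ℕ =>
        (s 0 + s 1 + s 2 + 1).choose (s 0) * (s 1 + s 2).choose (s 2))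
      fun x => ((1 - x 0) * (1 - x 0 - x 1 - x 2))⁻¹ := by
  refine (hasGenFun_choose_two.choose_mul 0 1).congr (fun s => ?_) fun x hx => ?_
  · simp only [← Fin.sum_univ_three s]
    rfl
  · have hne := one_sub_ne_zero hx 0
    change _ = (1 - x 0)⁻¹ ^ 2 * (1 - (1 - x 0)⁻¹ * x 1 - (1 - x 0)⁻¹ * x 2)⁻¹
    field_simp

theorem hasGenFun_omega_triple_succ :
    HasGenFun (fun s : Fin 3 → ℕ => Omega [s 0, s 1 + 1, s 2])
      fun x => ((1 - x 0) * (1 - x 2) * (1 - x 0 - x 1 - x 2))⁻¹ := by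
  refine (hasGenFun_choose_mul_choose.sum_range 2).congr (fun s => ?_) fun x _ => ?_
  · simp [omega_triple_eq_sum]
  · rw [← mul_inv]
    ring_nf

theorem hasGenFun_choose_last_mul_omega_triple :
    HasGenFun
      (fun s : Fin 4 → ℕ => (s 0 + s 1 + s 2 + s 3 + 2).choose (s 3) * Omega [s 0, s 1 + 1, s 2])
      fun x => ((1 - x 0 - x 3) * (1 - x 2 - x 3) * (1 - x 0 - x 1 - x 2 - x 3))⁻¹ := by
  refine (hasGenFun_omega_triple_succ.choose_mul 3 2).congr (fun s => ?_) fun x hx => ?_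
  · simp only [← Fin.sum_univ_four s]
    rfl
  · have hne := one_sub_ne_zero hx 3
    let y := (1 - x 3)⁻¹
    change _ = y ^ 3 * ((1 - y * x 0) * (1 - y * x 2) * (1 - y * x 0 - y * x 1 - y * x 2))⁻¹
    simp only [y]
    field_simp
    ring_nf

theorem hasGenFun_choose_first_mul_omega_triple :
    HasGenFun
      (fun s : Fin 4 → ℕ => (s 0 + s 1 + s 2 + s 3 + 2).choose (s 0) * Omega [s 1, s 2 + 1, s 3])
      fun x => ((1 - x 0 - x 1) * (1 - x 0 - x 3) * (1 - x 0 - x 1 - x 2 - x 3))⁻¹ := by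
  refine (hasGenFun_omega_triple_succ.choose_mul 0 2).congr (fun s => ?_) fun x hx => ?_
  · simp only [← Fin.sum_univ_four s]
    rfl
  · have hne := one_sub_ne_zero hx 0
    let y := (1 - x 0)⁻¹
    change _ = y ^ 3 * ((1 - y * x 1) * (1 - y * x 3) * (1 - y * x 1 - y * x 2 - y * x 3))⁻¹
    simp only [y]
    field_simp

theorem hasGenFun_omega_quadruple_second_zero :
    HasGenFun (fun s : Fin 3 → ℕ => Omega [s 0, 0, s 1, s 2])
      fun x => (1 - x 2) * ((1 - x 0 - x 2) * (1 - x 1 - x 2))⁻¹ := by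
  refine ((HasGenFun.one 2).choose_mul 2 0).congr (fun s => ?_) fun x hx => ?_
  · simp only [omega_quadruple_second_zero, ← Fin.sum_univ_three s, add_zero, mul_one]
  · have hne := one_sub_ne_zero hx 2
    rw [Fin.prod_univ_two]
    let y := (1 - x 2)⁻¹
    change _ = y ^ 1 * ((1 - y * x 0)⁻¹ * (1 - y * x 1)⁻¹)
    simp only [y]
    field_simp
    ring_nf

theorem hasGenFun_omega_quadruple_third_zero :
    HasGenFun (fun s : Fin 3 → ℕ => Omega [s 0, s 1 + 1, 0, s 2])
      fun x => ((1 - x 0 - x 1) * (1 - x 0 - x 2))⁻¹ := by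
  refine ((HasGenFun.one 2).choose_mul 0 1).congr (fun s => ?_) fun x hx => ?_
  · rw [omega_quadruple_third_zero, mul_one, add_right_comm _ (s 1 + 1), ← add_assoc,
      add_right_comm _ (s 2)]
    simp only [← Fin.sum_univ_three s]
  · have hne := one_sub_ne_zero hx 0
    rw [Fin.prod_univ_two]
    let y := (1 - x 0)⁻¹
    change _ = y ^ 2 * ((1 - y * x 1)⁻¹ * (1 - y * x 2)⁻¹)
    simp only [y]
    field_simp

theorem hasGenFun_omega_quadruple_succ_succ :
    HasGenFun (fun s : Fin 4 → ℕ => Omega [s 0, s 1 + 1, s 2 + 1, s 3]) fun x =>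
      ((1 - x 0 - x 1) * (1 - x 0 - x 3) * (1 - x 0 - x 1 - x 2 - x 3))⁻¹ +
        ((1 - x 0 - x 3) * (1 - x 2 - x 3) * (1 - x 0 - x 1 - x 2 - x 3))⁻¹ :=
  (hasGenFun_choose_first_mul_omega_triple.add hasGenFun_choose_last_mul_omega_triple).congr
    (fun _ => omega_quadruple _ _ _ _) fun _ _ => rfl

theorem hasGenFun_omega_quadruple_succ :
    HasGenFun (fun s : Fin 4 → ℕ => Omega [s 0, s 1 + 1, s 2, s 3]) fun x =>
      ((1 - x 0 - x 1) * (1 - x 0 - x 3))⁻¹ +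
        x 2 * (((1 - x 0 - x 1) * (1 - x 0 - x 3) * (1 - x 0 - x 1 - x 2 - x 3))⁻¹ +
          ((1 - x 0 - x 3) * (1 - x 2 - x 3) * (1 - x 0 - x 1 - x 2 - x 3))⁻¹) :=
  HasGenFun.of_zero_succ 2 (c := fun s => Omega [s 0, s 1 + 1, s 2, s 3])
    (hasGenFun_omega_quadruple_third_zero.congr (fun _ => rfl) fun _ _ => rfl)
    (hasGenFun_omega_quadruple_succ_succ.congr (fun _ => rfl) fun _ _ => rfl)

theorem hasGenFun_omega_quadruple :
    HasGenFun (fun s : Fin 4 → ℕ => Omega [s 0, s 1, s 2, s 3]) fun x =>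
      (1 / (1 - x 0 - x 1 - x 2 - x 3)) *
        ((1 - x 0) * (1 - x 0 - x 1 - x 3) / ((1 - x 0 - x 1) * (1 - x 0 - x 3)) +
          (1 - x 3) * (1 - x 0 - x 2 - x 3) / ((1 - x 0 - x 3) * (1 - x 2 - x 3)) - 1) := by
  refine (HasGenFun.of_zero_succ 1 (c := fun s => Omega [s 0, s 1, s 2, s 3])
    (hasGenFun_omega_quadruple_second_zero.congr (fun _ => rfl) fun _ _ => rfl)
    (hasGenFun_omega_quadruple_succ.congr (fun _ => rfl) fun _ _ => rfl)).congr
      (fun _ => rfl) fun x hx => ?_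
  have h01 := one_sub_sub_ne_zero hx (show (0 : Fin 4) ≠ 1 by decide)
  have h03 := one_sub_sub_ne_zero hx (show (0 : Fin 4) ≠ 3 by decide)
  have h23 := one_sub_sub_ne_zero hx (show (2 : Fin 4) ≠ 3 by decide)
  have hsum : 1 - x 0 - x 1 - x 2 - x 3 ≠ 0 := by
    have hlt := (sum_le_sum fun j _ => le_abs_self (x j)).trans_lt hx
    rw [Fin.sum_univ_four] at hlt
    exact ne_of_gt (by linarith)
  change _ = (1 - x 3) * ((1 - x 0 - x 3) * (1 - x 2 - x 3))⁻¹ + x 1 * _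
  field_simp
  ring

end OmegaGenFun

/-- Quadruples of natural numbers as exponent vectors indexed by `Fin 4`. -/
def quadrupleEquiv : ℕ × ℕ × ℕ × ℕ ≃ (Fin 4 → ℕ) where
  toFun i := ![i.1, i.2.1, i.2.2.1, i.2.2.2]
  invFun s := (s 0, s 1, s 2, s 3)
  left_inv _ := rfl
  right_inv s := by ext j; fin_cases j <;> rfl

theorem stmt_5 (x₁ x₂ x₃ x₄ : ℝ) (hx : |x₁| + |x₂| + |x₃| + |x₄| < 1) :
    ∑' i : ℕ × ℕ × ℕ × ℕ,
        (Omega [i.1, i.2.1, i.2.2.1, i.2.2.2] : ℝ) *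
          x₁ ^ i.1 * x₂ ^ i.2.1 * x₃ ^ i.2.2.1 * x₄ ^ i.2.2.2 =
      (1 / (1 - x₁ - x₂ - x₃ - x₄)) *
        ((1 - x₁) * (1 - x₁ - x₂ - x₄) / ((1 - x₁ - x₂) * (1 - x₁ - x₄)) +
          (1 - x₄) * (1 - x₁ - x₃ - x₄) / ((1 - x₁ - x₄) * (1 - x₃ - x₄)) - 1) := by
  have hball : ∑ j, |![x₁, x₂, x₃, x₄] j| < 1 := by simpa [Fin.sum_univ_four] using hx
  have hsum := quadrupleEquiv.hasSum_iff.2 (hasGenFun_omega_quadruple ![x₁, x₂, x₃, x₄] hball)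
  simp only [Function.comp_def, Fin.prod_univ_four, ← mul_assoc] at hsum
  exact hsum.tsum_eq
end

section
/- For every positive integer k, one has Ω(1, k, 1) = k² + 3k + 1; that is, the number of permutations τ of {0, 1, …, k+2} satisfying τ(0) < τ(1) > τ(2) > ⋯ > τ(k+1) < τ(k+2) equals k² + 3k + 1. -/
/-! The permutations counted by `Ω(1, k, 1)` decrease along all interior positions, but not at the
first step and not at the last one. Both conditions are handled by inclusion–exclusion: prescribing
only that `τ` decreases off a set `t` of positions leaves exactly the restriction of `τ` to `t`
free, as an arbitrary injection. With `n = k + 3` positions, taking `t` to be the two ends, either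
one of them, or empty gives `n (n - 1) - 2 n + 1 = k² + 3 k + 1`. -/

/-- The permutations of `α` that are decreasing on the complement of `t`: the values at the points
of `t` are unconstrained. -/
def antitoneOff {α : Type*} [LinearOrder α] (t : Set α) : Set (Equiv.Perm α) :=
  {τ | StrictAntiOn τ tᶜ}

section Counting

variable {α : Type*} [LinearOrder α] [Finite α]

theorem exists_equiv_strictAnti {β : Type*} [LinearOrder β] [Finite β]
    (h : Nat.card α = Nat.card β) : ∃ e : α ≃ β, StrictAnti e := by
  have := Fintype.ofFinite α
  have := Fintype.ofFinite β
  let e : αᵒᵈ ≃o β := (monoEquivOfFin αᵒᵈ (Nat.card_eq_fintype_card (α := α)).symm).symm.trans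
    (monoEquivOfFin β (by rw [h, Nat.card_eq_fintype_card]))
  exact ⟨OrderDual.toDual.trans e.toEquiv, fun _ _ hab ↦ e.strictMono hab⟩

theorem eq_of_mem_antitoneOff_of_eqOn {t : Set α} {σ τ : Equiv.Perm α} (hσ : σ ∈ antitoneOff t)
    (hτ : τ ∈ antitoneOff t) (h : Set.EqOn σ τ t) : σ = τ := by
  have image_compl_eq : σ '' tᶜ = τ '' tᶜ := by
    rw [Set.image_compl_eq σ.bijective, Set.image_compl_eq τ.bijective, h.image_eq]
  have restrict_eq : tᶜ.domRestrict σ = tᶜ.domRestrict τ :=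
    ((Set.strictAntiOn_iff_strictAnti.mp hσ).range_inj (Set.strictAntiOn_iff_strictAnti.mp hτ)).mp
      (by simpa only [Set.image_eq_range] using image_compl_eq)
  have eqOn_compl : Set.EqOn σ τ tᶜ := Set.domRestrict_eq_domRestrict_iff.mp restrict_eq
  ext x
  exact (em (x ∈ t)).elim (h ·) (eqOn_compl ·)

theorem exists_mem_antitoneOff_extending {t : Set α} (f : t ↪ α) :
    ∃ τ ∈ antitoneOff t, ∀ x : t, τ x = f x := by
  classical
  have card_compl_eq : Nat.card ↥tᶜ = Nat.card ↥(Set.range f)ᶜ := by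
    rw [Nat.card_coe_set_eq, Nat.card_coe_set_eq, Set.ncard_compl, Set.ncard_compl,
      Set.ncard_range_of_injective f.injective, Nat.card_coe_set_eq]
  obtain ⟨e, he⟩ := exists_equiv_strictAnti card_compl_eq
  let τ : Equiv.Perm α := (Equiv.Set.sumCompl t).symm.trans
    (((Equiv.ofInjective f f.injective).sumCongr e).trans (Equiv.Set.sumCompl (Set.range f)))
  refine ⟨τ, fun x hx y hy hxy ↦ ?_, fun x ↦ ?_⟩
  · have τ_apply {z} (hz : z ∈ tᶜ) : τ z = e ⟨z, hz⟩ := by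
      simp [τ, Equiv.Set.sumCompl_symm_apply_of_notMem hz]
    rw [τ_apply hx, τ_apply hy]
    exact he hxy
  · simp [τ]

theorem ncard_antitoneOff (t : Set α) :
    (antitoneOff t).ncard = (Nat.card α).descFactorial t.ncard := by
  classical
  have := Fintype.ofFinite α
  let restriction (τ : antitoneOff t) : t ↪ α :=
    (Function.Embedding.subtype _).trans τ.1.toEmbedding
  have bijective : Function.Bijective restriction := by
    refine ⟨fun σ τ h ↦ Subtype.ext ?_, fun f ↦ ?_⟩
    · exact eq_of_mem_antitoneOff_of_eqOn σ.2 τ.2 fun x hx ↦ DFunLike.congr_fun h ⟨x, hx⟩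
    · obtain ⟨τ, hτ, hτf⟩ := exists_mem_antitoneOff_extending f
      exact ⟨⟨τ, hτ⟩, DFunLike.ext _ _ hτf⟩
  rw [← Nat.card_coe_set_eq, Nat.card_eq_of_bijective restriction bijective,
    Nat.card_eq_fintype_card, Fintype.card_embedding_eq, ← Nat.card_eq_fintype_card,
    ← Nat.card_eq_fintype_card, Nat.card_coe_set_eq]

end Counting

theorem antitoneOff_mono {α : Type*} [LinearOrder α] {s t : Set α} (h : s ⊆ t) :
    antitoneOff s ⊆ antitoneOff t :=
  fun _ hτ ↦ hτ.mono (Set.compl_subset_compl.mpr h)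

section BoundedOrder

variable {α : Type*} [LinearOrder α] [BoundedOrder α]

theorem antitoneOff_top_inter_antitoneOff_bot {c : α} (hbot : ⊥ < c) (htop : c < ⊤) :
    antitoneOff {(⊤ : α)} ∩ antitoneOff {⊥} = antitoneOff ∅ := by
  refine Set.Subset.antisymm (fun τ ⟨hτ_top, hτ_bot⟩ ↦ ?_) <|
    Set.subset_inter (antitoneOff_mono (Set.empty_subset _)) (antitoneOff_mono (Set.empty_subset _))
  have anti_Iic : StrictAntiOn τ (Set.Iic c) := hτ_top.mono fun _ hx ↦ (hx.trans_lt htop).ne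
  have anti_Ici : StrictAntiOn τ (Set.Ici c) := hτ_bot.mono fun _ hx ↦ (hbot.trans_le hx).ne'
  exact (anti_Iic.Iic_union_Ici anti_Ici).strictAntiOn _

theorem ncard_antitoneOff_bot_top_diff [Finite α] (hα : 2 < Nat.card α) :
    (antitoneOff {(⊥ : α), ⊤} \ (antitoneOff {⊤} ∪ antitoneOff {⊥})).ncard + 2 * Nat.card α =
      Nat.card α * (Nat.card α - 1) + 1 := by
  obtain ⟨c, hbot, htop⟩ : ∃ c : α, ⊥ < c ∧ c < ⊤ := by
    obtain ⟨c, -, hc⟩ := Set.exists_mem_notMem_of_ncard_lt_ncard (s := {⊥, ⊤}) (t := Set.univ)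
      ((Set.ncard_insert_le _ _).trans_lt (by simpa using hα))
    exact ⟨c, bot_lt_iff_ne_bot.mpr (hc <| .inl ·), lt_top_iff_ne_top.mpr (hc <| .inr ·)⟩
  have union_subset : antitoneOff {(⊤ : α)} ∪ antitoneOff {⊥} ⊆ antitoneOff {⊥, ⊤} :=
    Set.union_subset (antitoneOff_mono (by simp)) (antitoneOff_mono (by simp))
  have card_diff := Set.ncard_sdiff_add_ncard_of_subset union_subset
  have card_union := Set.ncard_union_add_ncard_inter (antitoneOff {(⊤ : α)}) (antitoneOff {⊥})
  rw [antitoneOff_top_inter_antitoneOff_bot hbot htop] at card_union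
  simp only [ncard_antitoneOff, Set.ncard_pair (hbot.trans htop).ne, Set.ncard_singleton,
    Set.ncard_empty, Nat.descFactorial_succ, Nat.descFactorial_zero, Nat.sub_zero, mul_one]
    at card_diff card_union
  rw [mul_comm (Nat.card α)]
  omega

end BoundedOrder

section Fin

theorem strictAntiOn_iff_succ_lt_castSucc {β : Type*} [Preorder β] {n : ℕ} {s : Set (Fin (n + 1))}
    (hs : s.OrdConnected) {f : Fin (n + 1) → β} :
    StrictAntiOn f s ↔ ∀ i : Fin n, i.castSucc ∈ s → i.succ ∈ s → f i.succ < f i.castSucc := by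
  refine ⟨fun hf i hi hi' ↦ hf hi hi' i.castSucc_lt_succ, fun hf ↦ ?_⟩
  refine strictAntiOn_of_succ_lt hs fun a ha hmem hmem' ↦ ?_
  rw [isMax_iff_eq_top, Fin.top_eq_last] at ha
  obtain ⟨i, rfl⟩ := Fin.exists_castSucc_eq.mpr ha
  rw [Fin.orderSucc_castSucc] at hmem' ⊢
  exact hf i hmem hmem'

variable {n : ℕ}

theorem castSucc_ne_bot_iff {i : Fin n} : i.castSucc ≠ ⊥ ↔ 0 < i.val := by
  rw [bot_eq_zero, Fin.ne_iff_vne, Fin.val_castSucc, Fin.val_zero, Nat.pos_iff_ne_zero]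

theorem succ_ne_top_iff {i : Fin n} : i.succ ≠ ⊤ ↔ i.val + 1 < n := by
  rw [Fin.top_eq_last, Fin.ne_iff_vne, Fin.val_succ, Fin.val_last,
    (Nat.succ_le_of_lt i.isLt).lt_iff_ne]

theorem castSucc_ne_top {i : Fin n} : i.castSucc ≠ ⊤ := i.castSucc_lt_last.ne

theorem succ_ne_bot {i : Fin n} : i.succ ≠ ⊥ := i.succ_ne_zero

theorem mem_antitoneOff_iff {t : Set (Fin (n + 1))} (ht : tᶜ.OrdConnected)
    {τ : Equiv.Perm (Fin (n + 1))} :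
    τ ∈ antitoneOff t ↔ ∀ i : Fin n, i.castSucc ∉ t → i.succ ∉ t → τ i.succ < τ i.castSucc :=
  strictAntiOn_iff_succ_lt_castSucc ht

theorem mem_antitoneOff_top_iff {τ : Equiv.Perm (Fin (n + 1))} :
    τ ∈ antitoneOff {⊤} ↔ ∀ i : Fin n, i.val + 1 < n → τ i.succ < τ i.castSucc := by
  rw [mem_antitoneOff_iff (by rw [← Set.Iio_top]; exact Set.ordConnected_Iio)]
  simp [← ne_eq, succ_ne_top_iff, castSucc_ne_top]

theorem mem_antitoneOff_bot_iff {τ : Equiv.Perm (Fin (n + 1))} :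
    τ ∈ antitoneOff {⊥} ↔ ∀ i : Fin n, 0 < i.val → τ i.succ < τ i.castSucc := by
  rw [mem_antitoneOff_iff (by rw [← Set.Ioi_bot]; exact Set.ordConnected_Ioi)]
  simp [← ne_eq, castSucc_ne_bot_iff, succ_ne_bot]

theorem mem_antitoneOff_bot_top_iff {τ : Equiv.Perm (Fin (n + 1))} :
    τ ∈ antitoneOff {⊥, ⊤} ↔
      ∀ i : Fin n, 0 < i.val → i.val + 1 < n → τ i.succ < τ i.castSucc := by
  have ordConnected : ({⊥, ⊤}ᶜ : Set (Fin (n + 1))).OrdConnected := by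
    rw [Set.insert_eq, Set.compl_union, ← Set.Ioi_bot, ← Set.Iio_top]
    exact Set.ordConnected_Ioi.inter Set.ordConnected_Iio
  rw [mem_antitoneOff_iff ordConnected]
  simp [← ne_eq, castSucc_ne_bot_iff, succ_ne_top_iff, castSucc_ne_top, succ_ne_bot]

theorem mem_antitoneOff_bot_top_diff_iff (hn : 1 < n) {τ : Equiv.Perm (Fin (n + 1))} :
    τ ∈ antitoneOff {⊥, ⊤} \ (antitoneOff {⊤} ∪ antitoneOff {⊥}) ↔
      ∀ i : Fin n, τ i.succ < τ i.castSucc ↔ 0 < i.val ∧ i.val + 1 < n := by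
  rw [Set.mem_sdiff, Set.mem_union, not_or, mem_antitoneOff_top_iff, mem_antitoneOff_bot_iff,
    mem_antitoneOff_bot_top_iff]
  constructor
  · rintro ⟨descent_interior, not_top, not_bot⟩ i
    push Not at not_top not_bot
    obtain ⟨a, ha, ascent_a⟩ := not_top
    obtain ⟨b, hb, ascent_b⟩ := not_bot
    have a_eq_zero : a.val = 0 := by grind
    have b_succ_eq : b.val + 1 = n := by grind
    grind
  · intro h
    refine ⟨fun i hi hi' ↦ (h i).mpr ⟨hi, hi'⟩, fun descent ↦ ?_, fun descent ↦ ?_⟩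
    · exact ((h ⟨0, by omega⟩).mp (descent _ hn)).1.false
    · have last_step_interior := (h ⟨n - 1, by omega⟩).mp (descent _ (Nat.sub_pos_of_lt hn))
      exact last_step_interior.2.ne (Nat.sub_add_cancel hn.le)

end Fin

theorem monotCond_iff_descent_iff_odd {a : List ℕ} {τ : Equiv.Perm (Fin (a.sum + 1))} :
    MonotCond a τ ↔ ∀ k < a.length, ∀ i : Fin a.sum, (a.take k).sum ≤ i →
      i < (a.take (k + 1)).sum → (τ i.succ < τ i.castSucc ↔ Odd k) := by
  have ascent_iff (i : Fin a.sum) : τ i.castSucc < τ i.succ ↔ ¬ τ i.succ < τ i.castSucc := by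
    rw [not_lt, (τ.injective.ne i.castSucc_lt_succ.ne).le_iff_lt]
  have block_iff (k : ℕ) (i : Fin a.sum) :
      (if k % 2 = 0 then τ i.castSucc < τ i.succ else τ i.succ < τ i.castSucc) ↔
        (τ i.succ < τ i.castSucc ↔ Odd k) := by
    rcases Nat.mod_two_eq_zero_or_one k with hk | hk <;> simp [hk, ascent_iff, Nat.odd_iff]
  simp only [← block_iff]
  exact ⟨fun h k hk i hi hi' ↦ h k hk i hi hi' (Nat.succ_lt_succ i.isLt),
    fun h k hk j hj hj' hlt ↦ h k hk ⟨j, Nat.lt_of_succ_lt_succ hlt⟩ hj hj'⟩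

theorem monotCond_triple_iff {a b c : ℕ} {τ : Equiv.Perm (Fin ([a, b, c].sum + 1))} :
    MonotCond [a, b, c] τ ↔
      ∀ i : Fin [a, b, c].sum, τ i.succ < τ i.castSucc ↔ a ≤ i.val ∧ i.val < a + b := by
  have lt_sum (i : Fin [a, b, c].sum) : i.val < a + (b + c) := i.isLt
  rw [monotCond_iff_descent_iff_odd]
  simp only [List.length_cons, List.length_nil, Nat.forall_lt_succ_right, Nat.not_lt_zero,
    IsEmpty.forall_iff, implies_true, true_and, List.take_succ_cons, List.take_zero, List.sum_cons,
    List.sum_nil, ← forall_and]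
  refine forall_congr' fun i ↦ ?_
  grind [lt_sum i]

theorem stmt_11 (k : ℕ) (hk : 0 < k) :
    Omega [1, k, 1] = k ^ 2 + 3 * k + 1 := by
  have sum_eq : [1, k, 1].sum = k + 2 := by
    simp only [List.sum_cons, List.sum_nil]
    omega
  have setOf_monotCond_eq : {τ | MonotCond [1, k, 1] τ} =
      antitoneOff {⊥, ⊤} \ (antitoneOff {⊤} ∪ antitoneOff {⊥}) := by
    ext τ
    rw [Set.mem_ofPred_eq, monotCond_triple_iff, mem_antitoneOff_bot_top_diff_iff (by omega)]
    exact forall_congr' fun i ↦ iff_congr Iff.rfl (by omega)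
  have card_eq : Nat.card (Fin ([1, k, 1].sum + 1)) = k + 3 := by rw [Nat.card_fin, sum_eq]
  have count := ncard_antitoneOff_bot_top_diff (α := Fin ([1, k, 1].sum + 1)) (by omega)
  rw [← setOf_monotCond_eq, card_eq, Nat.add_sub_assoc (by decide)] at count
  change {τ | MonotCond [1, k, 1] τ}.ncard = _
  linarith
end

section
/- One has ( Σ_{k₀=1}^{∞} Σ_{k₁=1}^{∞} 3·k₀·k₁·Ω'(1, k₀, k₁, 1) − (3/2)² ) / (6e − 63/4) = (2e² − 8e + 7)/(8e − 21), where e is Euler's number. (This is the correlation corr(μ₀, μ₁) ≈ 0.0427 of two consecutive inter-extremum distances μ₀, μ₁, where E[μ₀μ₁] = Σ_{k₀,k₁} 3k₀k₁Ω'(1,k₀,k₁,1), E μ₀ = E μ₁ = 3/2 and Var μ₀ = Var μ₁ = 6e − 63/4.) -/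
/-- The normalized quantity `Ω'(a) = Ω(a) / (N + 1)!` where `N = a.sum`. -/
noncomputable def Omega' (a : List ℕ) : ℝ :=
  (Omega a : ℝ) / (Nat.factorial (a.sum + 1))

/-!
A permutation realises the pattern up `1`, down `k`, up `l`, down `1` iff it falls `k` times and
then rises `l` times, but neither the fall nor the rise extends by one more step to the outside.
By inclusion–exclusion, `Ω'(1, k, l, 1)` is therefore the mixed second difference of the probability
`V(k, l)` of a single valley. The lowest of `k + l + 1` points is equally likely to be any of them,
and the points on either side are equally likely to be in any order, so
`V(k, l) = 1 / (k! l! (k + l + 1))`. Summation by parts in each variable turns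
`∑ k l Ω'(1, k, l, 1)` into `∑ V(k, l)` over `k, l ≥ 1`, which the binomial theorem evaluates along
antidiagonals in terms of the exponential series at `1` and `2`.
-/

open Equiv Set
open Finset.HasAntidiagonal (antidiagonal)
open scoped Finset Nat

section Tiling

variable {G ι : Type*} [Group G]

lemma ncard_mul_card_eq_of_existsUnique {s : ι → G} {P R : Set G}
    (hmem : ∀ g i, g * s i ∈ P → g ∈ R) (hunique : ∀ g ∈ R, ∃! i, g * s i ∈ P) :
    P.ncard * Nat.card ι = R.ncard := by
  let f : P × ι → R := fun x ↦ ⟨x.1 * (s x.2)⁻¹, hmem _ x.2 (by simp)⟩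
  have hf : f.Bijective := by
    constructor
    · rintro ⟨⟨g, hg⟩, i⟩ ⟨⟨h, hh⟩, j⟩ heq
      have hgh : g * (s i)⁻¹ = h * (s j)⁻¹ := congrArg Subtype.val heq
      obtain rfl : i = j := (hunique (g * (s i)⁻¹) (hmem _ i (by simpa))).unique
        (by simpa) (by simpa [hgh])
      simpa using hgh
    · rintro ⟨g, hg⟩
      obtain ⟨i, hi, -⟩ := hunique g hg
      exact ⟨(⟨g * s i, hi⟩, i), by simp [f]⟩
  rw [← Nat.card_coe_set_eq, ← Nat.card_coe_set_eq, ← Nat.card_prod, Nat.card_eq_of_bijective f hf]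

end Tiling

lemma existsUnique_perm_strictMono {ι β : Type*} [LinearOrder ι] [Finite ι] [LinearOrder β]
    {f : ι → β} (hf : f.Injective) : ∃! σ : Perm ι, StrictMono (f ∘ σ) := by
  classical
  have := Fintype.ofFinite ι
  let e : ι ≃o range f := (Fintype.orderIsoFinOfCardEq ι rfl).symm.trans
    (Fintype.orderIsoFinOfCardEq (range f) (Set.card_range_of_injective hf))
  let σ₀ : Perm ι := e.toEquiv.trans (Equiv.ofInjective f hf).symm
  have hσ₀ : StrictMono (f ∘ σ₀) := by
    convert (Subtype.strictMono_coe _).comp e.strictMono using 1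
    ext i
    simp [σ₀, Equiv.apply_ofInjective_symm]
  refine ⟨σ₀, hσ₀, fun σ hσ ↦ Equiv.ext fun i ↦ hf (congrFun ((hσ.range_inj hσ₀).1 ?_) i)⟩
  simp only [EquivLike.range_comp]

section Order

variable {α β : Type*} [LinearOrder α] {f : α → β}

lemma strictMonoOn_Icc_iff_of_le [Preorder β] {p q r : α} (hpq : p ≤ q) (hqr : q ≤ r) :
    StrictMonoOn f (Icc p r) ↔ StrictMonoOn f (Icc p q) ∧ StrictMonoOn f (Icc q r) := by
  rw [← Icc_union_Icc_eq_Icc hpq hqr]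
  exact ⟨fun h ↦ ⟨h.mono subset_union_left, h.mono subset_union_right⟩,
    fun h ↦ h.1.union h.2 (isGreatest_Icc hpq) (isLeast_Icc hqr)⟩

lemma strictMonoOn_Icc_iff_not_strictAntiOn [LinearOrder β] (hf : f.Injective) {p q : α}
    (hpq : p ⋖ q) : StrictMonoOn f (Icc p q) ↔ ¬ StrictAntiOn f (Icc p q) := by
  simp [hpq.Icc_eq, strictMonoOn_insert_iff, strictAntiOn_insert_iff, hpq.lt, hpq.lt.not_gt,
    (hf.ne hpq.lt.ne).le_iff_lt]

lemma card_Icc_eq_card_Ico_add_card_Ioc_add_one [LocallyFiniteOrder α] {p v q : α} (hpv : p ≤ v)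
    (hvq : v ≤ q) : #(Finset.Icc p q) = #(Finset.Ico p v) + #(Finset.Ioc v q) + 1 := by
  have hunion : Finset.Icc p q = Finset.Ico p v ∪ Finset.Icc v q := by
    ext x
    simp only [Finset.mem_Icc, Finset.mem_union, Finset.mem_Ico]
    grind
  have hdisj : Disjoint (Finset.Ico p v) (Finset.Icc v q) :=
    Finset.disjoint_left.2 fun x hx hx' ↦
      (Finset.mem_Ico.1 hx).2.not_ge (Finset.mem_Icc.1 hx').1
  rw [hunion, Finset.card_union_of_disjoint hdisj, ← Finset.Ioc_insert_left hvq,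
    Finset.card_insert_of_notMem (by simp), add_assoc]

end Order

lemma strictMonoOn_Icc_fin_iff {n : ℕ} {β : Type*} [Preorder β] (f : Fin n → β) (p q : Fin n) :
    StrictMonoOn f (Icc p q) ↔ ∀ j : ℕ, p ≤ j → j < q → ∀ h : j + 1 < n,
      f ⟨j, Nat.lt_of_succ_lt h⟩ < f ⟨j + 1, h⟩ := by
  constructor
  · exact fun hf j hpj hjq h ↦ hf ⟨hpj, hjq.le⟩ ⟨hpj.trans j.le_succ, hjq⟩ j.lt_succ_self
  · intro hf
    refine strictMonoOn_of_lt_succ ordConnected_Icc fun a ha hap haq ↦ ?_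
    have hsucc : (a : ℕ) + 1 = (Order.succ a : Fin n) :=
      Nat.covBy_iff_add_one_eq.1 (Fin.covBy_iff.1 (Order.covBy_succ_of_not_isMax ha))
    have hlt : (a : ℕ) + 1 < n := hsucc ▸ (Order.succ a).2
    have hsucc' : Order.succ a = ⟨a + 1, hlt⟩ := Fin.ext hsucc.symm
    rw [hsucc'] at haq ⊢
    exact hf a hap.1 haq.2 hlt

section SummationByParts

variable {E : Type*} [AddCommGroup E] [TopologicalSpace E] [IsTopologicalAddGroup E]

lemma hasSum_succ_nsmul_sub_fst {κ : Type*} {f : ℕ × κ → E} {a : E} (hf : HasSum f a)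
    (hf' : Summable fun p ↦ p.1 • f p) :
    HasSum (fun p ↦ (p.1 + 1) • (f p - f (p.1 + 1, p.2))) a := by
  obtain ⟨b, hb⟩ := hf'
  have hshift : HasSum (fun p : ℕ × κ ↦ (p.1 + 1) • f (p.1 + 1, p.2)) b := by
    have hinj : (Prod.map Nat.succ id : ℕ × κ → ℕ × κ).Injective :=
      Nat.succ_injective.prodMap Function.injective_id
    refine (hinj.hasSum_iff ?_).2 hb
    rintro ⟨_ | i, x⟩ hx
    · simp
    · exact absurd ⟨(i, x), rfl⟩ hx
  simpa only [smul_sub, succ_nsmul, add_sub_cancel_left] using (hb.add hf).sub hshift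

lemma hasSum_succ_nsmul_sub_sub {f : ℕ × ℕ → E} {a : E} (hf : HasSum f a)
    (hfst : Summable fun p ↦ p.1 • f p) (hsnd : Summable fun p ↦ p.2 • f p)
    (hboth : Summable fun p ↦ p.1 • p.2 • f p) :
    HasSum (fun p ↦ (p.2 + 1) • (p.1 + 1) • (f p - f (p.1 + 1, p.2) -
      (f (p.1, p.2 + 1) - f (p.1 + 1, p.2 + 1)))) a := by
  have hdiff := hasSum_succ_nsmul_sub_fst hf hfst
  have hdiff' : Summable fun p : ℕ × ℕ ↦ p.2 • (p.1 + 1) • (f p - f (p.1 + 1, p.2)) := by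
    refine (hasSum_succ_nsmul_sub_fst hsnd.hasSum hboth).summable.congr fun p ↦ ?_
    rw [← nsmul_sub, smul_comm]
  have hswap := hasSum_succ_nsmul_sub_fst ((Equiv.prodComm ℕ ℕ).hasSum_iff.2 hdiff)
    ((Equiv.prodComm ℕ ℕ).summable_iff.2 hdiff')
  simpa only [Function.comp_def, Equiv.prodComm_apply, Prod.fst_swap, Prod.snd_swap,
    Prod.swap_prod_mk, Prod.swap_swap, ← nsmul_sub] using (Equiv.prodComm ℕ ℕ).hasSum_iff.2 hswap

end SummationByParts

lemma hasSum_pnat_prod_iff {E : Type*} [AddCommMonoid E] [TopologicalSpace E] {f : ℕ → ℕ → E}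
    {a : E} : HasSum (fun p : ℕ+ × ℕ+ ↦ f p.1 p.2) a ↔
      HasSum (fun p : ℕ × ℕ ↦ f (p.1 + 1) (p.2 + 1)) a := by
  rw [← (Equiv.pnatEquivNat.prodCongr Equiv.pnatEquivNat).hasSum_iff]
  simp [Function.comp_def]

lemma hasSum_of_hasSum_antidiagonal {A E : Type*} [AddMonoid A] [Finset.HasAntidiagonal A]
    [AddCommMonoid E] [TopologicalSpace E] [ContinuousAdd E] [T3Space E] {f : A × A → E} {a : E}
    (hf : HasSum (fun n ↦ ∑ p ∈ antidiagonal n, f p) a) (hf' : Summable f) : HasSum f a := by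
  let e := Finset.HasAntidiagonal.sigmaAntidiagonalEquivProd (A := A)
  refine e.hasSum_iff.1 (hf.sigma_of_hasSum (fun n ↦ ?_) (e.summable_iff.2 hf'))
  rw [← Finset.sum_coe_sort]
  exact hasSum_fintype _

section Perm

variable {α : Type*}

section DecidableEq

variable [DecidableEq α]

lemma forall_apply_le_mul_ofSubtype_iff [LE α] {S C : Finset α} (hSC : S ⊆ C) {v : α} (hv : v ∉ S)
    (τ : Perm α) (σ : Perm S) :
    (∀ x ∈ C, (τ * Perm.ofSubtype σ) v ≤ (τ * Perm.ofSubtype σ) x) ↔ ∀ x ∈ C, τ v ≤ τ x := by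
  simp only [Perm.mul_apply, Perm.ofSubtype_apply_of_not_mem σ hv]
  refine (Perm.ofSubtype σ).forall_congr fun x ↦ imp_congr_left ?_
  by_cases hx : x ∈ S
  · simp [hSC hx, hSC ((Perm.ofSubtype_apply_mem_iff_mem σ x).2 hx)]
  · rw [Perm.ofSubtype_apply_of_not_mem σ hx]

lemma eqOn_mul_ofSubtype {S T : Finset α} (hST : Disjoint S T) (τ : Perm α) (σ : Perm S) :
    EqOn (τ * Perm.ofSubtype σ : Perm α) τ T := fun x hx ↦ by
  rw [Perm.mul_apply, Perm.ofSubtype_apply_of_not_mem σ (Finset.disjoint_right.1 hST hx)]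

end DecidableEq

variable [LinearOrder α]

/-- The permutations that decrease from `p` to `v` and increase from `v` to `q`, with no condition
outside `[p, q]`. -/
def valleys (p v q : α) : Set (Perm α) :=
  {τ | StrictAntiOn τ (Icc p v) ∧ StrictMonoOn τ (Icc v q)}

lemma valleys_eq_inter [LocallyFiniteOrder α] {p v q : α} (hpv : p ≤ v) (hvq : v ≤ q) :
    valleys p v q = {τ : Perm α | ∀ x ∈ Finset.Icc p q, τ v ≤ τ x} ∩
      {τ : Perm α | StrictAntiOn τ (Finset.Ico p v)} ∩
      {τ : Perm α | StrictMonoOn τ (Finset.Ioc v q)} := by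
  ext τ
  simp only [valleys, mem_inter_iff, mem_ofPred_eq, Finset.coe_Ico, Finset.coe_Ioc, Finset.mem_Icc]
  constructor
  · rintro ⟨hanti, hmono⟩
    refine ⟨⟨fun x hx ↦ ?_, hanti.mono Ico_subset_Icc_self⟩, hmono.mono Ioc_subset_Icc_self⟩
    rcases le_total x v with hxv | hvx
    · exact hanti.antitoneOn ⟨hx.1, hxv⟩ ⟨hpv, le_rfl⟩ hxv
    · exact hmono.monotoneOn ⟨le_rfl, hvq⟩ ⟨hvx, hx.2⟩ hvx
  · rintro ⟨⟨hmin, hanti⟩, hmono⟩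
    have hlt {x : α} (hpx : p ≤ x) (hxq : x ≤ q) (hne : v ≠ x) : τ v < τ x :=
      (hmin x ⟨hpx, hxq⟩).lt_of_ne (τ.injective.ne hne)
    rw [← Ico_insert_right hpv, ← Ioc_insert_left hvq,
      strictAntiOn_insert_iff_of_forall_le fun x hx ↦ hx.2.le,
      strictMonoOn_insert_iff_of_forall_ge fun x hx ↦ hx.1.le]
    exact ⟨⟨fun x hx hxv ↦ hlt hx.1 (hxv.le.trans hvq) hxv.ne', hanti⟩,
      fun x hx hvx ↦ hlt (hpv.trans hvx.le) hx.2 hvx.ne, hmono⟩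

lemma ncard_inter_strictMonoOn_mul_factorial {β : Type*} [LinearOrder β] {g : α → β}
    (hg : g.Injective) {S : Finset α} {R : Set (Perm α)}
    (hR : ∀ τ (σ : Perm S), τ * Perm.ofSubtype σ ∈ R ↔ τ ∈ R) :
    (R ∩ {τ | StrictMonoOn (g ∘ τ) S}).ncard * (#S)! = R.ncard := by
  have hcomp (τ : Perm α) (σ : Perm S) :
      StrictMonoOn (g ∘ (τ * Perm.ofSubtype σ : Perm α)) S ↔
        StrictMono ((g ∘ τ ∘ Subtype.val) ∘ σ) := by
    rw [strictMonoOn_iff_strictMono]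
    simp [Function.comp_def, Perm.ofSubtype_apply_coe]
  have hcard : Nat.card (Perm S) = (#S)! := by rw [Nat.card_perm, Nat.card_eq_finsetCard]
  rw [← hcard]
  refine ncard_mul_card_eq_of_existsUnique (s := fun σ : Perm S ↦ Perm.ofSubtype σ)
    (fun τ σ h ↦ (hR τ σ).1 h.1) fun τ hτ ↦ ?_
  simpa only [mem_inter_iff, hR, hτ, true_and, mem_ofPred_eq, hcomp] using
    existsUnique_perm_strictMono (hg.comp (τ.injective.comp Subtype.val_injective))

variable [Finite α]

lemma ncard_forall_apply_le_mul_card {C : Finset α} {v : α} (hv : v ∈ C) :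
    {τ : Perm α | ∀ x ∈ C, τ v ≤ τ x}.ncard * #C = (Nat.card α)! := by
  have hmaps (c : C) (x : α) : swap v c x ∈ C ↔ x ∈ C := by
    have := c.2
    grind
  have hcomp (τ : Perm α) (c : C) :
      (∀ x ∈ C, (τ * swap v c : Perm α) v ≤ (τ * swap v c : Perm α) x) ↔ ∀ x ∈ C, τ c ≤ τ x := by
    simp only [Perm.mul_apply, swap_apply_left]
    refine (swap v (c : α)).forall_congr fun x ↦ ?_
    rw [hmaps]
  rw [← Nat.card_perm, ← Set.ncard_univ, ← Nat.card_eq_finsetCard]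
  refine ncard_mul_card_eq_of_existsUnique (s := fun c : C ↦ swap v (c : α))
    (fun _ _ _ ↦ mem_univ _) fun τ _ ↦ ?_
  simp only [mem_ofPred_eq, hcomp]
  obtain ⟨c, hc, hmin⟩ := C.exists_min_image τ ⟨v, hv⟩
  exact ⟨⟨c, hc⟩, hmin, fun d hd ↦ Subtype.ext (τ.injective ((hd c hc).antisymm (hmin d d.2)))⟩

lemma ncard_valleys_mul [LocallyFiniteOrder α] {p v q : α} (hpv : p ≤ v) (hvq : v ≤ q) :
    (valleys p v q).ncard * (#(Finset.Ioc v q))! * (#(Finset.Ico p v))! * #(Finset.Icc p q) =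
      (Nat.card α)! := by
  have hvl : v ∉ Finset.Ico p v := by simp
  have hvr : v ∉ Finset.Ioc v q := by simp
  have hl : Finset.Ico p v ⊆ Finset.Icc p q := fun x ↦ by
    simpa using fun h1 h2 ↦ ⟨h1, h2.le.trans hvq⟩
  have hr : Finset.Ioc v q ⊆ Finset.Icc p q := fun x ↦ by
    simpa using fun h1 h2 ↦ ⟨hpv.trans h1.le, h2⟩
  have hdisj : Disjoint (Finset.Ioc v q) (Finset.Ico p v) :=
    Finset.disjoint_left.2 fun x ↦ by simpa using fun h1 _ _ ↦ h1.le
  let M : Set (Perm α) := {τ | ∀ x ∈ Finset.Icc p q, τ v ≤ τ x}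
  let A : Set (Perm α) := {τ | StrictAntiOn τ (Finset.Ico p v)}
  let B : Set (Perm α) := {τ | StrictMonoOn τ (Finset.Ioc v q)}
  have hright : (M ∩ A ∩ B).ncard * (#(Finset.Ioc v q))! = (M ∩ A).ncard :=
    ncard_inter_strictMonoOn_mul_factorial Function.injective_id fun τ σ ↦
      and_congr (forall_apply_le_mul_ofSubtype_iff hr hvr τ σ)
        (eqOn_mul_ofSubtype hdisj τ σ).congr_strictAntiOn
  have hleft : (M ∩ A).ncard * (#(Finset.Ico p v))! = M.ncard :=
    ncard_inter_strictMonoOn_mul_factorial OrderDual.toDual.injective fun τ σ ↦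
      forall_apply_le_mul_ofSubtype_iff hl hvl τ σ
  have hmin : M.ncard * #(Finset.Icc p q) = (Nat.card α)! :=
    ncard_forall_apply_le_mul_card (Finset.mem_Icc.2 ⟨hpv, hvq⟩)
  rw [valleys_eq_inter hpv hvq, hright, hleft, hmin]

lemma ncard_peak_valley_peak {u p v q w : α} (hup : u ⋖ p) (hpv : p ≤ v) (hvq : v ≤ q)
    (hqw : q ⋖ w) :
    ({τ : Perm α | StrictMonoOn τ (Icc u p) ∧ StrictAntiOn τ (Icc p v) ∧
        StrictMonoOn τ (Icc v q) ∧ StrictAntiOn τ (Icc q w)}.ncard : ℤ) =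
      (valleys p v q).ncard - (valleys u v q).ncard - (valleys p v w).ncard +
        (valleys u v w).ncard := by
  have hleft (τ : Perm α) : StrictAntiOn τ (Icc u v) ↔
      StrictAntiOn τ (Icc u p) ∧ StrictAntiOn τ (Icc p v) :=
    strictMonoOn_Icc_iff_of_le (f := OrderDual.toDual ∘ τ) hup.le hpv
  have hright (τ : Perm α) : StrictMonoOn τ (Icc v w) ↔
      StrictMonoOn τ (Icc v q) ∧ StrictMonoOn τ (Icc q w) :=
    strictMonoOn_Icc_iff_of_le hvq hqw.le
  have hdiff : {τ : Perm α | StrictMonoOn τ (Icc u p) ∧ StrictAntiOn τ (Icc p v) ∧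
        StrictMonoOn τ (Icc v q) ∧ StrictAntiOn τ (Icc q w)} =
      valleys p v q \ (valleys u v q ∪ valleys p v w) := by
    ext τ
    have h1 := strictMonoOn_Icc_iff_not_strictAntiOn τ.injective hup
    have h2 := strictMonoOn_Icc_iff_not_strictAntiOn τ.injective hqw
    simp only [valleys, mem_sdiff, Set.mem_union, mem_ofPred_eq, hleft, hright]
    tauto
  have hinter : valleys u v q ∩ valleys p v w = valleys u v w := by
    ext τ
    simp only [valleys, mem_inter_iff, mem_ofPred_eq, hleft, hright]
    tauto
  have hsubset : valleys u v q ∪ valleys p v w ⊆ valleys p v q := by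
    rintro τ (⟨h1, h2⟩ | ⟨h1, h2⟩)
    · exact ⟨((hleft τ).1 h1).2, h2⟩
    · exact ⟨h1, ((hright τ).1 h2).1⟩
  rw [hdiff, cast_ncard_sdiff hsubset (Set.toFinite _)]
  have := ncard_union_add_ncard_inter (valleys u v q) (valleys p v w)
  rw [hinter] at this
  lia

end Perm

section ValleyProb

/-- The probability that `k + l + 1` i.i.d. continuous random variables decrease `k` times and
then increase `l` times. -/
noncomputable def valleyProb (k l : ℕ) : ℝ :=
  1 / (k ! * l ! * (k + l + 1))

lemma ncard_valleys_div {α : Type*} [LinearOrder α] [Finite α] [LocallyFiniteOrder α] {p v q : α}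
    (hpv : p ≤ v) (hvq : v ≤ q) :
    ((valleys p v q).ncard : ℝ) / (Nat.card α)! =
      valleyProb #(Finset.Ico p v) #(Finset.Ioc v q) := by
  rw [valleyProb, div_eq_div_iff (by positivity) (by positivity), ← ncard_valleys_mul hpv hvq,
    card_Icc_eq_card_Ico_add_card_Ioc_add_one hpv hvq]
  push_cast
  ring

lemma summable_mul_valleyProb_succ_succ {c : ℕ × ℕ → ℝ}
    (hc : ∀ p, |c p| ≤ (p.1 + 1) * (p.2 + 1)) :
    Summable fun p ↦ c p * valleyProb (p.1 + 1) (p.2 + 1) := by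
  have hsum : Summable fun n : ℕ ↦ (1 : ℝ) / n ! := by
    simpa using Real.summable_pow_div_factorial 1
  refine .of_norm_bounded (hsum.mul_of_nonneg hsum (fun _ ↦ by positivity) fun _ ↦ by positivity)
    fun ⟨i, j⟩ ↦ ?_
  have hnonneg : 0 ≤ valleyProb (i + 1) (j + 1) := by unfold valleyProb; positivity
  calc ‖c (i, j) * valleyProb (i + 1) (j + 1)‖
    _ = |c (i, j)| * valleyProb (i + 1) (j + 1) := by
      rw [norm_mul, Real.norm_eq_abs, Real.norm_of_nonneg hnonneg]
    _ ≤ (i + 1) * (j + 1) * valleyProb (i + 1) (j + 1) :=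
      mul_le_mul_of_nonneg_right (hc (i, j)) hnonneg
    _ = 1 / i ! * (1 / j !) * (1 / (i + j + 3)) := by
      rw [valleyProb, Nat.factorial_succ, Nat.factorial_succ]
      push_cast
      field_simp
      ring
    _ ≤ 1 / i ! * (1 / j !) :=
      mul_le_of_le_one_right (by positivity) ((div_le_one (by positivity)).2 (by linarith))

lemma sum_antidiagonal_valleyProb (n : ℕ) :
    ∑ p ∈ antidiagonal n, valleyProb p.1 p.2 = 2 ^ n / (n + 1)! := by
  have hchoose (p : ℕ × ℕ) (hp : p ∈ antidiagonal n) :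
      valleyProb p.1 p.2 = n.choose p.1 / (n + 1)! := by
    obtain rfl := Finset.HasAntidiagonal.mem_antidiagonal.1 hp
    rw [valleyProb, Nat.cast_add_choose, Nat.factorial_succ]
    push_cast
    field_simp
  rw [Finset.sum_congr rfl hchoose, ← Finset.sum_div,
    Finset.Nat.sum_antidiagonal_eq_sum_range_succ_mk]
  congr 1
  exact_mod_cast Nat.sum_range_choose n

lemma sum_antidiagonal_valleyProb_succ_succ (n : ℕ) :
    ∑ p ∈ antidiagonal n, valleyProb (p.1 + 1) (p.2 + 1) =
      2⁻¹ * (2 ^ (n + 3) / (n + 3)!) - 2 * (1 / (n + 3)!) := by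
  have h := sum_antidiagonal_valleyProb (n + 2)
  rw [Finset.Nat.antidiagonal_succ_succ'] at h
  simp only [Finset.sum_cons, Finset.sum_map, Function.Embedding.prodMap,
    Function.Embedding.coeFn_mk, Prod.map_fst, Prod.map_snd, Nat.succ_eq_add_one] at h
  have hfst : valleyProb 0 (n + 2) = 1 / (n + 3)! := by
    rw [valleyProb, Nat.factorial_succ (n + 2)]
    push_cast
    field_simp
    ring
  have hsnd : valleyProb (n + 2) 0 = 1 / (n + 3)! := by
    rw [← hfst, valleyProb, valleyProb]
    ring
  rw [hfst, hsnd] at h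
  linear_combination h

lemma hasSum_valleyProb_succ_succ :
    HasSum (fun p : ℕ × ℕ ↦ valleyProb (p.1 + 1) (p.2 + 1))
      (Real.exp 1 ^ 2 / 2 - 2 * Real.exp 1 + 5 / 2) := by
  have hexp (x : ℝ) : HasSum (fun n : ℕ ↦ x ^ (n + 3) / (n + 3)!)
      (Real.exp x - (1 + x + x ^ 2 / 2)) := by
    have h := (hasSum_nat_add_iff' 3).2 (NormedSpace.expSeries_div_hasSum_exp x)
    simpa [Finset.sum_range_succ, Real.exp_eq_exp_ℝ] using h
  have hdiag : HasSum (fun n ↦ ∑ p ∈ antidiagonal n, valleyProb (p.1 + 1) (p.2 + 1))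
      (Real.exp 1 ^ 2 / 2 - 2 * Real.exp 1 + 5 / 2) := by
    have hval : Real.exp 1 ^ 2 / 2 - 2 * Real.exp 1 + 5 / 2 =
        2⁻¹ * (Real.exp 2 - (1 + 2 + 2 ^ 2 / 2)) - 2 * (Real.exp 1 - (1 + 1 + 1 ^ 2 / 2)) := by
      rw [← Real.exp_nat_mul]
      norm_num
      ring
    rw [hval]
    simpa only [sum_antidiagonal_valleyProb_succ_succ, one_pow] using
      ((hexp 2).mul_left 2⁻¹).sub ((hexp 1).mul_left 2)
  refine hasSum_of_hasSum_antidiagonal hdiag ?_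
  simpa using summable_mul_valleyProb_succ_succ (c := 1) fun p ↦ by
    have : (1 : ℝ) ≤ (p.1 + 1) * (p.2 + 1) := one_le_mul_of_one_le_of_one_le (by simp) (by simp)
    simpa

end ValleyProb

section Blocks

/-- The partial sum `s_k = a₁ + ⋯ + a_k`, at which block `k` ends and block `k + 1` begins, as a
point of `{0, …, a.sum}`. -/
def partialSum (a : List ℕ) (k : ℕ) : Fin (a.sum + 1) :=
  ⟨(a.take k).sum, Nat.lt_succ_of_le ((a.take_sublist k).sum_le_sum fun _ _ ↦ Nat.zero_le _)⟩

lemma partialSum_succ {a : List ℕ} {k : ℕ} (hk : k < a.length) :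
    (partialSum a (k + 1) : ℕ) = partialSum a k + a[k] :=
  List.sum_take_succ a k hk

lemma monotCond_iff_s16 {a : List ℕ} {τ : Perm (Fin (a.sum + 1))} :
    MonotCond a τ ↔ ∀ k < a.length,
      if k % 2 = 0 then StrictMonoOn τ (Icc (partialSum a k) (partialSum a (k + 1)))
      else StrictAntiOn τ (Icc (partialSum a k) (partialSum a (k + 1))) := by
  refine forall₂_congr fun k _ ↦ ?_
  split_ifs
  · exact (strictMonoOn_Icc_fin_iff τ (partialSum a k) (partialSum a (k + 1))).symm
  · exact (strictMonoOn_Icc_fin_iff (OrderDual.toDual ∘ τ) (partialSum a k)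
      (partialSum a (k + 1))).symm

lemma monotCond_peak_valley_peak_iff {k l : ℕ} {τ : Perm (Fin ([1, k, l, 1].sum + 1))} :
    MonotCond [1, k, l, 1] τ ↔
      StrictMonoOn τ (Icc (partialSum [1, k, l, 1] 0) (partialSum [1, k, l, 1] 1)) ∧
      StrictAntiOn τ (Icc (partialSum [1, k, l, 1] 1) (partialSum [1, k, l, 1] 2)) ∧
      StrictMonoOn τ (Icc (partialSum [1, k, l, 1] 2) (partialSum [1, k, l, 1] 3)) ∧
      StrictAntiOn τ (Icc (partialSum [1, k, l, 1] 3) (partialSum [1, k, l, 1] 4)) := by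
  simp only [monotCond_iff_s16, List.length_cons, List.length_nil, Nat.forall_lt_succ_left]
  simp

lemma Omega'_peak_valley_peak (k l : ℕ) :
    Omega' [1, k, l, 1] = valleyProb k l - valleyProb (k + 1) l -
      (valleyProb k (l + 1) - valleyProb (k + 1) (l + 1)) := by
  let s := partialSum [1, k, l, 1]
  have h₁ : (s 1 : ℕ) = s 0 + 1 := partialSum_succ (by simp)
  have h₂ : (s 2 : ℕ) = s 1 + k := partialSum_succ (by simp)
  have h₃ : (s 3 : ℕ) = s 2 + l := partialSum_succ (by simp)
  have h₄ : (s 4 : ℕ) = s 3 + 1 := partialSum_succ (by simp)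
  have hcount : (Omega [1, k, l, 1] : ℤ) = (valleys (s 1) (s 2) (s 3)).ncard -
      (valleys (s 0) (s 2) (s 3)).ncard - (valleys (s 1) (s 2) (s 4)).ncard +
      (valleys (s 0) (s 2) (s 4)).ncard := by
    rw [← ncard_peak_valley_peak (Fin.covBy_iff.2 (Nat.covBy_iff_add_one_eq.2 h₁.symm))
      (by lia) (by lia) (Fin.covBy_iff.2 (Nat.covBy_iff_add_one_eq.2 h₄.symm)),
      ← Nat.card_coe_set_eq]
    simp only [Omega, monotCond_peak_valley_peak_iff]
    rfl
  have hprob {p v q : Fin ([1, k, l, 1].sum + 1)} {i j : ℕ} (hv : (v : ℕ) = p + i)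
      (hq : (q : ℕ) = v + j) :
      ((valleys p v q).ncard : ℝ) / ([1, k, l, 1].sum + 1)! = valleyProb i j := by
    have h := ncard_valleys_div (p := p) (v := v) (q := q) (by lia) (by lia)
    rwa [Nat.card_fin, Fin.card_Ico, Fin.card_Ioc, hq, hv, add_tsub_cancel_left,
      add_tsub_cancel_left] at h
  have hcount' := congrArg (Int.cast : ℤ → ℝ) hcount
  push_cast at hcount'
  rw [Omega', hcount', ← hprob h₂ h₃, ← hprob (p := s 0) (v := s 2) (by lia) h₃,
    ← hprob (v := s 2) (q := s 4) h₂ (by lia),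
    ← hprob (p := s 0) (v := s 2) (q := s 4) (by lia) (by lia)]
  ring

end Blocks

lemma hasSum_mul_Omega'_peak_valley_peak :
    HasSum (fun p : ℕ × ℕ ↦ (p.1 + 1) * (p.2 + 1) * Omega' [1, p.1 + 1, p.2 + 1, 1])
      (Real.exp 1 ^ 2 / 2 - 2 * Real.exp 1 + 5 / 2) := by
  have hfst := summable_mul_valleyProb_succ_succ (c := fun p ↦ p.1) fun p ↦ by
    rw [abs_of_nonneg (by positivity)]
    nlinarith
  have hsnd := summable_mul_valleyProb_succ_succ (c := fun p ↦ p.2) fun p ↦ by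
    rw [abs_of_nonneg (by positivity)]
    nlinarith
  have hboth := summable_mul_valleyProb_succ_succ (c := fun p ↦ p.1 * p.2) fun p ↦ by
    rw [abs_of_nonneg (by positivity)]
    nlinarith
  refine (hasSum_succ_nsmul_sub_sub hasSum_valleyProb_succ_succ (by simpa using hfst)
    (by simpa using hsnd) (by simpa [mul_assoc] using hboth)).congr_fun fun p ↦ ?_
  rw [Omega'_peak_valley_peak]
  simp only [nsmul_eq_mul]
  push_cast
  ring

theorem stmt_16 :
    ((∑' p : ℕ+ × ℕ+, 3 * (p.1 : ℝ) * (p.2 : ℝ) * Omega' [1, (p.1 : ℕ), (p.2 : ℕ), 1]) -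
          (3 / 2) ^ 2) /
        (6 * Real.exp 1 - 63 / 4) =
      (2 * Real.exp 1 ^ 2 - 8 * Real.exp 1 + 7) / (8 * Real.exp 1 - 21) := by
  have hmean : HasSum
      (fun p : ℕ+ × ℕ+ ↦ 3 * (p.1 : ℝ) * (p.2 : ℝ) * Omega' [1, (p.1 : ℕ), (p.2 : ℕ), 1])
      (3 * (Real.exp 1 ^ 2 / 2 - 2 * Real.exp 1 + 5 / 2)) := by
    refine (hasSum_pnat_prod_iff (f := fun k l ↦ 3 * (k : ℝ) * l * Omega' [1, k, l, 1])).2 ?_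
    simpa [mul_assoc] using hasSum_mul_Omega'_peak_valley_peak.mul_left 3
  rw [hmean.tsum_eq]
  calc (3 * (Real.exp 1 ^ 2 / 2 - 2 * Real.exp 1 + 5 / 2) - (3 / 2) ^ 2) /
        (6 * Real.exp 1 - 63 / 4)
    _ = 3 / 4 * (2 * Real.exp 1 ^ 2 - 8 * Real.exp 1 + 7) /
        (3 / 4 * (8 * Real.exp 1 - 21)) := by congr 1 <;> ring
    _ = _ := mul_div_mul_left _ _ (by norm_num)
end
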